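/- arXiv:1701.02868 — 6 statements merged into one kernel-verified Lean document; each statement's English description precedes it below -/
import Mathlib

section
/- Let Δ be a simplicial complex on X = {x_1,…,x_n} and let k be a positive integer. Then Δ is shellable if and only if the expansion Δ^k is k-shellable. -/
/-- An abstract simplicial complex on vertex type `V`: a collection of finite subsets
(faces) closed under taking subsets. -/
def IsComplex {V : Type*} (Δ : Set (Finset V)) : Prop :=
  ∀ ⦃F G : Finset V⦄, F ∈ Δ → G ⊆ F → G ∈ Δ

/-- The facets (maximal faces) of a collection of finite sets. -/
def facets {V : Type*} (Δ : Set (Finset V)) : Set (Finset V) :=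
  {F | F ∈ Δ ∧ ∀ G ∈ Δ, F ⊆ G → F = G}

/-- The faces of the subcomplex `⟨F j⟩ ∩ ⟨F 0, …, F (j-1)⟩` determined by a list
`F 0, …, F (r-1)` of facets. -/
def interFace {V : Type*} {r : ℕ} (F : Fin r → Finset V) (j : Fin r) (G : Finset V) : Prop :=
  G ⊆ F j ∧ ∃ i : Fin r, (i : ℕ) < (j : ℕ) ∧ G ⊆ F i

/-- `F 0, …, F (r-1)` is a `k`-shelling order: for each `j > 0`, the subcomplex
`⟨F j⟩ ∩ ⟨F 0, …, F (j-1)⟩` is generated by a nonempty set `S` of (maximal) proper faces of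
`⟨F j⟩` of dimension `|F j| - k - 1`, and if it has more than one facet then any two
disjoint facets `σ, τ` of it satisfy `F j ⊆ σ ∪ τ`. -/
def IsKShellingOrder {V : Type*} [DecidableEq V] (k : ℕ) {r : ℕ} (F : Fin r → Finset V) :
    Prop :=
  ∀ j : Fin r, 0 < (j : ℕ) →
    ∃ S : Finset (Finset V), S.Nonempty ∧
      (∀ σ ∈ S, σ ⊆ F j ∧ σ.card + k = (F j).card) ∧
      (∀ G : Finset V, interFace F j G ↔ ∃ σ ∈ S, G ⊆ σ) ∧
      (1 < S.card → ∀ σ ∈ S, ∀ τ ∈ S, Disjoint σ τ → F j ⊆ σ ∪ τ)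

/-- A complex is `k`-shellable if its facets can be enumerated by a `k`-shelling order. -/
def IsKShellable {V : Type*} [DecidableEq V] (k : ℕ) (Δ : Set (Finset V)) : Prop :=
  ∃ (r : ℕ) (F : Fin r → Finset V),
    Function.Injective F ∧ Set.range F = facets Δ ∧ IsKShellingOrder k F

/-- Classical shelling order: for each `j > 0` the subcomplex `⟨F j⟩ ∩ ⟨F 0, …, F (j-1)⟩`
is pure of dimension `dim (F j) - 1`, i.e. every face of it is contained in a face of it of
cardinality `|F j| - 1`. -/
def IsShellingOrder {V : Type*} {r : ℕ} (F : Fin r → Finset V) : Prop :=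
  ∀ j : Fin r, 0 < (j : ℕ) → ∀ G : Finset V, interFace F j G →
    ∃ G' : Finset V, interFace F j G' ∧ G ⊆ G' ∧ G'.card + 1 = (F j).card

/-- A complex is shellable if its facets can be enumerated by a shelling order. -/
def IsShellable {V : Type*} (Δ : Set (Finset V)) : Prop :=
  ∃ (r : ℕ) (F : Fin r → Finset V),
    Function.Injective F ∧ Set.range F = facets Δ ∧ IsShellingOrder F

/-- The expansion `F^k` of a finite set of vertices with respect to `k`. -/
def expandSet {V : Type*} (k : ℕ) (F : Finset V) : Finset (V × Fin k) :=
  F ×ˢ Finset.univ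

/-- The expansion `Δ^k` of a simplicial complex with respect to `k`:
the complex generated by the expansions of the facets of `Δ`. -/
def expansion {V : Type*} (k : ℕ) (Δ : Set (Finset V)) : Set (Finset (V × Fin k)) :=
  {G | ∃ F ∈ facets Δ, G ⊆ expandSet k F}

theorem mem_expandSet {V : Type*} {k : ℕ} {F : Finset V} {p : V × Fin k} :
    p ∈ expandSet k F ↔ p.1 ∈ F := by
  simp [expandSet]

theorem card_expandSet {V : Type*} (k : ℕ) (F : Finset V) :
    (expandSet k F).card = F.card * k := by
  simp [expandSet]

theorem expandSet_subset_expandSet {V : Type*} {k : ℕ} (hk : 1 ≤ k) {F G : Finset V} :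
    expandSet k F ⊆ expandSet k G ↔ F ⊆ G := by
  constructor
  · intro h x hx
    have : (x, (⟨0, hk⟩ : Fin k)) ∈ expandSet k G := h (mem_expandSet.2 hx)
    exact mem_expandSet.1 this
  · intro h p hp
    exact mem_expandSet.2 (h (mem_expandSet.1 hp))

theorem expandSet_injective {V : Type*} {k : ℕ} (hk : 1 ≤ k) :
    Function.Injective (expandSet k : Finset V → Finset (V × Fin k)) := fun _ _ h =>
  Finset.Subset.antisymm ((expandSet_subset_expandSet hk).1 h.subset)
    ((expandSet_subset_expandSet hk).1 h.symm.subset)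

theorem facets_expansion {V : Type*} {k : ℕ} (hk : 1 ≤ k) (Δ : Set (Finset V)) :
    facets (expansion k Δ) = expandSet k '' facets Δ := by
  ext G
  constructor
  · rintro ⟨⟨F, hF, hGF⟩, hmax⟩
    exact ⟨F, hF, (hmax _ ⟨F, hF, subset_rfl⟩ hGF).symm⟩
  · rintro ⟨F, hF, rfl⟩
    refine ⟨⟨F, hF, subset_rfl⟩, ?_⟩
    rintro G ⟨F', hF', hG⟩ hFG
    obtain rfl : F = F' := hF.2 F' hF'.1 ((expandSet_subset_expandSet hk).1 (hFG.trans hG))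
    exact hFG.antisymm hG

theorem interFace_expandSet {V : Type*} [DecidableEq V] {k r : ℕ} {F : Fin r → Finset V}
    {j : Fin r} {G : Finset (V × Fin k)} :
    interFace (fun i => expandSet k (F i)) j G ↔ interFace F j (G.image Prod.fst) := by
  simp [interFace, Finset.subset_iff, mem_expandSet]

theorem IsShellingOrder.isKShellingOrder_expandSet {V : Type*} [DecidableEq V] {k r : ℕ}
    {F : Fin r → Finset V} (hF : IsShellingOrder F) :
    IsKShellingOrder k (fun i => expandSet k (F i)) := by
  classical
  intro j hj
  refine ⟨((F j).powerset.filter fun A => interFace F j A ∧ A.card + 1 = (F j).card).image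
    (expandSet k), ?_, ?_, ?_, ?_⟩
  · obtain ⟨A, hA, -, hc⟩ := hF j hj ∅
      ⟨Finset.empty_subset _, ⟨0, hj.trans j.isLt⟩, hj, Finset.empty_subset _⟩
    exact ⟨_, Finset.mem_image_of_mem _
      (Finset.mem_filter.2 ⟨Finset.mem_powerset.2 hA.1, hA, hc⟩)⟩
  · simp only [Finset.forall_mem_image, Finset.mem_filter]
    rintro A ⟨-, hA, hc⟩
    refine ⟨fun p hp => mem_expandSet.2 (hA.1 (mem_expandSet.1 hp)), ?_⟩
    rw [card_expandSet, card_expandSet, ← hc, Nat.add_one_mul]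
  · intro G
    rw [interFace_expandSet]
    simp only [Finset.exists_mem_image, Finset.mem_filter, Finset.mem_powerset]
    constructor
    · intro hG
      obtain ⟨A, hA, hGA, hc⟩ := hF j hj _ hG
      exact ⟨A, ⟨hA.1, hA, hc⟩,
        fun p hp => mem_expandSet.2 (hGA (Finset.mem_image_of_mem _ hp))⟩
    · rintro ⟨A, ⟨-, ⟨hAj, i, hij, hAi⟩, -⟩, hGA⟩
      have hG : G.image Prod.fst ⊆ A :=
        Finset.image_subset_iff.2 fun p hp => mem_expandSet.1 (hGA hp)
      exact ⟨hG.trans hAj, i, hij, hG.trans hAi⟩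
  · intro hS
    simp only [Finset.forall_mem_image, Finset.mem_filter]
    rintro A ⟨-, hA, hAc⟩ B ⟨-, hB, hBc⟩ hdisj p hp
    by_contra hpAB
    simp only [Finset.mem_union, mem_expandSet, not_or] at hp hpAB
    have eq_erase : ∀ C, interFace F j C → C.card + 1 = (F j).card → p.1 ∉ C →
        C = (F j).erase p.1 := fun C hC hCc hpC =>
      Finset.eq_of_subset_of_card_le (Finset.subset_erase.2 ⟨hC.1, hpC⟩)
        (by rw [Finset.card_erase_of_mem hp]; omega)
    obtain rfl : A = B := (eq_erase A hA hAc hpAB.1).trans (eq_erase B hB hBc hpAB.2).symm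
    have hA0 : A = ∅ := Finset.eq_empty_of_forall_notMem fun x hx =>
      have hxA : (x, p.2) ∈ expandSet k A := mem_expandSet.2 hx
      Finset.disjoint_left.1 hdisj hxA hxA
    refine hS.not_ge (Finset.card_image_le.trans (Finset.card_le_one.2 ?_))
    have eq_empty : ∀ C : Finset V, C.card + 1 = (F j).card → C = ∅ := fun C hC => by
      rw [← Finset.card_eq_zero]
      rw [hA0, Finset.card_empty] at hAc
      omega
    simp only [Finset.mem_filter]
    rintro C ⟨-, -, hC⟩ D ⟨-, -, hD⟩
    rw [eq_empty C hC, eq_empty D hD]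

theorem IsKShellingOrder.isShellingOrder_of_expandSet {V : Type*} [DecidableEq V] {k r : ℕ}
    (hk : 1 ≤ k) {F : Fin r → Finset V} (hanti : ∀ i j, F j ⊆ F i → j = i)
    (hF : IsKShellingOrder k (fun i => expandSet k (F i))) : IsShellingOrder F := by
  intro j hj G hG
  obtain ⟨S, -, hcard, hgen, -⟩ := hF j hj
  have hGk : interFace (fun i => expandSet k (F i)) j (expandSet k G) := by
    obtain ⟨hGj, i, hij, hGi⟩ := hG
    exact ⟨(expandSet_subset_expandSet hk).2 hGj, i, hij, (expandSet_subset_expandSet hk).2 hGi⟩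
  obtain ⟨σ, hσ, hGσ⟩ := (hgen _).1 hGk
  obtain ⟨hσj, i, hij, hσi⟩ := (hgen σ).2 ⟨σ, hσ, subset_rfl⟩
  have hσij : σ ⊆ expandSet k (F j ∩ F i) := fun p hp => mem_expandSet.2
    (Finset.mem_inter.2 ⟨mem_expandSet.1 (hσj hp), mem_expandSet.1 (hσi hp)⟩)
  refine ⟨F j ∩ F i, ⟨Finset.inter_subset_left, i, hij, Finset.inter_subset_right⟩,
    (expandSet_subset_expandSet hk).1 (hGσ.trans hσij), le_antisymm ?_ ?_⟩
  · refine Finset.card_lt_card (Finset.inter_subset_left.ssubset_of_ne fun h => ?_)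
    obtain rfl := hanti i j (Finset.inter_eq_left.1 h)
    exact lt_irrefl _ hij
  · have hle := Finset.card_le_card hσij
    have hc := (hcard σ hσ).2
    simp only [card_expandSet] at hle hc
    refine Nat.le_of_mul_le_mul_right (c := k) ?_ hk
    rw [Nat.add_one_mul]
    omega

/-- Theorem: a simplicial complex `Δ` is shellable iff its expansion `Δ^k` is `k`-shellable. -/
theorem isShellable_iff_isKShellable_expansion {V : Type*} [DecidableEq V] [Fintype V]
    (Δ : Set (Finset V)) (hΔ : IsComplex Δ) (hΔe : ∅ ∈ Δ) (k : ℕ) (hk : 1 ≤ k) :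
    IsShellable Δ ↔ IsKShellable k (expansion k Δ) := by
  constructor
  · rintro ⟨r, F, hinj, hrange, hF⟩
    refine ⟨r, fun i => expandSet k (F i), (expandSet_injective hk).comp hinj, ?_,
      hF.isKShellingOrder_expandSet⟩
    rw [facets_expansion hk, ← hrange, ← Set.range_comp]
    rfl
  · rintro ⟨r, E, hinj, hrange, hE⟩
    rw [facets_expansion hk] at hrange
    have hmem : ∀ i, ∃ A ∈ facets Δ, expandSet k A = E i := fun i =>
      hrange.subset (Set.mem_range_self i)
    choose F hFΔ hFE using hmem
    obtain rfl : (fun i => expandSet k (F i)) = E := funext hFE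
    have hFinj : Function.Injective F := fun i j h => hinj (congrArg (expandSet k) h)
    refine ⟨r, F, hFinj, ?_, hE.isShellingOrder_of_expandSet hk fun i j h =>
      hFinj ((hFΔ j).2 _ (hFΔ i).1 h)⟩
    refine (expandSet_injective hk).image_injective ?_
    rw [← hrange, ← Set.range_comp]
    rfl
end

section
/- Let K be a field, S = K[x_1,…,x_n], k > 1 an integer, and let F_1,…,F_s be pairwise disjoint subsets of {x_1,…,x_n} each of cardinality k. Let f_1,…,f_{k^s} be the minimal monomial generators of the product ideal P_{F_1}⋯P_{F_s} ⊂ S, listed in decreasing lexicographic order induced by x_1 > x_2 > … > x_n. Then for every i = 2,…,k^s the colon ideal (f_1,…,f_{i−1}) : (f_i) is generated by linear forms (in fact by variables), and if n_i denotes the minimal number of homogeneous generators of (f_1,…,f_{i−1}) : (f_i), then max{n_i : i = 2,…,k^s} = n_{k^s} = (k−1)s. -/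
open MvPolynomial

/-- A finite generating set of an ideal generated by a finite set `W` of variables has at least
`W.card` elements. -/
theorem card_le_card_of_span_eq_span_X {σ K : Type*} [Field K] (W : Finset σ)
    (T : Finset (MvPolynomial σ K))
    (hT : Ideal.span (↑T : Set (MvPolynomial σ K)) =
      Ideal.span ((fun v => (X v : MvPolynomial σ K)) '' ↑W)) : W.card ≤ T.card := by
  classical
  let L : MvPolynomial σ K →ₗ[K] (W → K) :=
    LinearMap.pi fun w => lcoeff K (Finsupp.single (w : σ) 1)
  have hL (p : MvPolynomial σ K) (w : W) : L p w = coeff (Finsupp.single (w : σ) 1) p := rfl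
  have hzero : ∀ p ∈ Ideal.span (↑T : Set (MvPolynomial σ K)), coeff 0 p = 0 := by
    intro p hp
    rw [hT] at hp
    by_contra h
    obtain ⟨v, -, hv⟩ := mem_ideal_span_X_image.1 hp 0 (mem_support_iff.2 h)
    simp at hv
  have hmul (a p : MvPolynomial σ K) (hp : coeff 0 p = 0) : L (a * p) = coeff 0 a • L p := by
    ext w
    rw [Pi.smul_apply, hL, hL, coeff_mul, Finsupp.antidiagonal_single, Finset.sum_map]
    simp [Finset.Nat.antidiagonal_succ, hp]
  have hmem : ∀ p ∈ Ideal.span (↑T : Set (MvPolynomial σ K)),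
      L p ∈ Submodule.span K (↑(T.image L) : Set (W → K)) := by
    intro p hp
    induction hp using Submodule.span_induction with
    | mem x hx => exact Submodule.subset_span (by simpa using ⟨x, hx, rfl⟩)
    | zero => simp
    | add x y _ _ hx hy => rw [map_add]; exact add_mem hx hy
    | smul a x hx ih =>
      rw [smul_eq_mul, hmul a x (hzero x hx)]
      exact Submodule.smul_mem _ _ ih
  have htop : Submodule.span K (↑(T.image L) : Set (W → K)) = ⊤ := by
    rw [eq_top_iff, ← (Pi.basisFun K W).span_eq, Submodule.span_le]
    rintro _ ⟨w, rfl⟩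
    have hX : L (X (w : σ)) = Pi.basisFun K W w := by
      ext u
      rw [hL, coeff_X, Pi.basisFun_apply, Pi.single_apply]
      exact if_congr (by rw [Finsupp.single_left_inj one_ne_zero, Subtype.ext_iff, eq_comm]) rfl rfl
    rw [← hX]
    exact hmem _ (hT ▸ Ideal.subset_span ⟨w, w.2, rfl⟩)
  have hrank := finrank_span_finset_le_card (R := K) (T.image L)
  rw [Set.finrank, htop, finrank_top, Module.finrank_fintype_fun_eq_card,
    Fintype.card_coe] at hrank
  exact hrank.trans Finset.card_image_le

/-- Changing one value of `g` exchanges one variable of the monomial `∏ i, X (g i)`. -/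
theorem sum_single_update_add {ι σ : Type*} [Fintype ι] [DecidableEq ι] (g : ι → σ) (j : ι)
    (v : σ) :
    (∑ i, Finsupp.single (Function.update g j v i) 1) + Finsupp.single (g j) 1 =
      (∑ i, Finsupp.single (g i) 1 : σ →₀ ℕ) + Finsupp.single v 1 := by
  rw [← Finset.add_sum_erase _ _ (Finset.mem_univ j),
    ← Finset.add_sum_erase Finset.univ (fun i => Finsupp.single (g i) 1) (Finset.mem_univ j),
    Finset.sum_congr rfl (g := fun i => Finsupp.single (g i) 1) fun i hi => by
      rw [Function.update_of_ne (Finset.ne_of_mem_erase hi)], Function.update_self]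
  abel

/-- If `m' * x_w = m * x_v` with `x_w < x_v`, then `m < m'` lexicographically. -/
theorem toLex_lt_of_add_single_eq {σ : Type*} [LinearOrder σ] {m m' : σ →₀ ℕ} {v w : σ}
    (hvw : v < w) (h : m' + Finsupp.single w 1 = m + Finsupp.single v 1) :
    toLex m < toLex m' := by
  by_contra! hle
  exact (add_lt_add_of_le_of_lt hle (Finsupp.Lex.single_lt_iff.2 hvw)).ne
    (congrArg toLex h)

theorem eq_of_mem_of_mem_of_disjoint {ι σ : Type*} {F : ι → Finset σ}
    (hdisj : ∀ i j, i ≠ j → Disjoint (F i) (F j)) {i j : ι} {v : σ} (hi : v ∈ F i)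
    (hj : v ∈ F j) : i = j := by
  by_contra h
  exact Finset.disjoint_left.1 (hdisj i j h) hi hj

section Transversal

variable {ι σ : Type*} [Fintype ι]

theorem exists_eq_of_sum_single_ne_zero {g : ι → σ} {v : σ}
    (h : (∑ i, Finsupp.single (g i) 1 : σ →₀ ℕ) v ≠ 0) : ∃ j, g j = v := by
  by_contra! hne
  exact h (by simp [Finsupp.finsetSum_apply, hne])

theorem one_le_sum_single_apply (g : ι → σ) (j : ι) :
    1 ≤ (∑ i, Finsupp.single (g i) 1 : σ →₀ ℕ) (g j) := by
  rw [Finsupp.finsetSum_apply]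
  calc 1 = Finsupp.single (g j) 1 (g j) := by simp
    _ ≤ _ := Finset.single_le_sum (f := fun i => Finsupp.single (g i) 1 (g j))
      (fun _ _ => Nat.zero_le _) (Finset.mem_univ j)

theorem sum_single_apply_le_one {g : ι → σ} (hg : Function.Injective g) (v : σ) :
    (∑ i, Finsupp.single (g i) 1 : σ →₀ ℕ) v ≤ 1 := by
  classical
  rw [Finsupp.finsetSum_apply]
  simp only [Finsupp.single_apply, Finset.sum_boole, Nat.cast_id]
  exact Finset.card_le_one.2 fun a ha b hb => hg (by simp_all)

/-- If one transversal monomial is lexicographically smaller than another, then some block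
contains a variable of the larger one that precedes the variable of the smaller one. -/
theorem exists_lt_of_toLex_lt [LinearOrder σ] {F : ι → Finset σ}
    (hdisj : ∀ i j, i ≠ j → Disjoint (F i) (F j)) {g g' : ι → σ} (hg : ∀ i, g i ∈ F i)
    (hg' : ∀ i, g' i ∈ F i)
    (hlt : toLex (∑ i, Finsupp.single (g i) 1 : σ →₀ ℕ) <
      toLex (∑ i, Finsupp.single (g' i) 1)) :
    ∃ j, g' j < g j ∧ (∑ i, Finsupp.single (g i) 1 : σ →₀ ℕ) (g' j) <
      (∑ i, Finsupp.single (g' i) 1 : σ →₀ ℕ) (g' j) := by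
  have hinj : Function.Injective g' := fun a b hab =>
    eq_of_mem_of_mem_of_disjoint hdisj (hg' a) (hab ▸ hg' b)
  obtain ⟨v, heq, hv⟩ := Finsupp.Lex.lt_iff.1 hlt
  change (∑ i, Finsupp.single (g i) 1 : σ →₀ ℕ) v <
    (∑ i, Finsupp.single (g' i) 1 : σ →₀ ℕ) v at hv
  obtain ⟨j, rfl⟩ := exists_eq_of_sum_single_ne_zero (Nat.ne_zero_of_lt hv)
  refine ⟨j, ?_, hv⟩
  have hone := one_le_sum_single_apply g j
  rcases lt_trichotomy (g' j) (g j) with h | h | h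
  · exact h
  · have := sum_single_apply_le_one hinj (g' j)
    rw [← h] at hone
    omega
  · have hj : (∑ i, Finsupp.single (g i) 1 : σ →₀ ℕ) (g j) =
        (∑ i, Finsupp.single (g' i) 1 : σ →₀ ℕ) (g j) := heq _ h
    obtain ⟨j', hj'⟩ := exists_eq_of_sum_single_ne_zero (g := g') (v := g j) (by omega)
    obtain rfl := eq_of_mem_of_mem_of_disjoint hdisj (hj' ▸ hg' j' : g j ∈ F j') (hg j)
    exact absurd hj' h.ne'

end Transversal

/-- Lemma: let `k > 1` and let `F 0, …, F (s-1)` be pairwise disjoint `k`-element sets of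
variables.  List the `k^s` minimal monomial generators of `P_{F 0} ⋯ P_{F (s-1)}` in
decreasing lexicographic order (with `x_0 > x_1 > ⋯`), with exponent vectors
`f 0, …, f (k^s - 1)`.  Then every colon ideal `(f 0, …, f (i-1)) : (f i)` is generated by a
set `W` of variables; moreover its minimal number of generators `n_i = |W|` satisfies
`n_i ≤ (k-1)s`, with equality for the last generator, so that
`max{n_i} = n_{k^s} = (k-1)s`. -/
theorem colon_ideals_of_product_of_variable_ideals
    (K : Type*) [Field K] (n k s : ℕ) (hk : 1 < k)
    (F : Fin s → Finset (Fin n))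
    (hcard : ∀ i, (F i).card = k)
    (hdisj : ∀ i j, i ≠ j → Disjoint (F i) (F j))
    (f : Fin (k ^ s) → (Fin n →₀ ℕ))
    (hgen : Set.range f =
      {m | ∃ g : Fin s → Fin n, (∀ i, g i ∈ F i) ∧ m = ∑ i, Finsupp.single (g i) 1})
    (hdec : ∀ i j : Fin (k ^ s), i < j → toLex (f j) < toLex (f i)) :
    ∀ i : Fin (k ^ s), 0 < (i : ℕ) →
      ∃ W : Finset (Fin n),
        Submodule.colon
            (Ideal.span {p | ∃ l : Fin (k ^ s), (l : ℕ) < (i : ℕ) ∧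
              p = (monomial (f l) (1 : K) : MvPolynomial (Fin n) K)})
            (Ideal.span {(monomial (f i) (1 : K) : MvPolynomial (Fin n) K)})
          = Ideal.span ((fun v => (X v : MvPolynomial (Fin n) K)) '' ↑W) ∧
        (∀ T : Finset (MvPolynomial (Fin n) K),
          Ideal.span (↑T : Set (MvPolynomial (Fin n) K)) =
            Ideal.span ((fun v => (X v : MvPolynomial (Fin n) K)) '' ↑W) → W.card ≤ T.card) ∧
        W.card ≤ (k - 1) * s ∧
        ((i : ℕ) = k ^ s - 1 → W.card = (k - 1) * s) := by
  classical
  intro i _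
  have hanti : StrictAnti fun l => toLex (f l) := fun a b hab => hdec a b hab
  have hform (l) : ∃ g : Fin s → Fin n, (∀ i, g i ∈ F i) ∧
      f l = ∑ i, Finsupp.single (g i) 1 := by
    have : f l ∈ Set.range f := ⟨l, rfl⟩
    rwa [hgen] at this
  obtain ⟨g, hgF, hg⟩ := hform i
  have hupdate (j : Fin s) (v : Fin n) (hv : v ∈ F j) :
      ∃ l, f l + Finsupp.single (g j) 1 = f i + Finsupp.single v 1 := by
    obtain ⟨l, hl⟩ : (∑ i, Finsupp.single (Function.update g j v i) 1) ∈ Set.range f := by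
      rw [hgen]
      refine ⟨_, fun a => ?_, rfl⟩
      by_cases ha : a = j
      · subst ha; simpa using hv
      · simpa [ha] using hgF a
    exact ⟨l, by rw [hl, hg, sum_single_update_add]⟩
  let W : Finset (Fin n) := Finset.univ.biUnion fun j => {v ∈ F j | v < g j}
  have hWmem (v) : v ∈ W ↔ ∃ j, v ∈ F j ∧ v < g j := by simp [W]
  have hWcard : W.card = ∑ j, {v ∈ F j | v < g j}.card :=
    Finset.card_biUnion fun a _ b _ hab =>
      (hdisj a b hab).mono (Finset.filter_subset _ _) (Finset.filter_subset _ _)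
  have hsub (j) : {v ∈ F j | v < g j} ⊆ (F j).erase (g j) := fun v hv => by
    rw [Finset.mem_filter] at hv
    exact Finset.mem_erase.2 ⟨hv.2.ne, hv.1⟩
  have herase (j) : ((F j).erase (g j)).card = k - 1 := by
    rw [Finset.card_erase_of_mem (hgF j), hcard]
  have hspan : {p | ∃ l : Fin (k ^ s), (l : ℕ) < (i : ℕ) ∧
      p = (monomial (f l) (1 : K) : MvPolynomial (Fin n) K)} =
      (fun m => monomial m (1 : K)) '' (f '' Set.Iio i) := by
    ext p
    simp [eq_comm]
  refine ⟨W, ?_, fun T hT => card_le_card_of_span_eq_span_X W T hT, ?_, fun hi => ?_⟩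
  · rw [hspan]
    apply le_antisymm
    · intro p hp
      have hpm := Submodule.mem_colon.1 hp _ (Ideal.mem_span_singleton_self _)
      rw [smul_eq_mul, mem_ideal_span_monomial_image] at hpm
      refine mem_ideal_span_X_image.2 fun m hm => ?_
      obtain ⟨_, ⟨l, hl, rfl⟩, hle⟩ := hpm (m + f i) (by
        rw [mem_support_iff, coeff_mul_monomial, mul_one]
        exact mem_support_iff.1 hm)
      obtain ⟨g', hg'F, hg'⟩ := hform l
      have hlt := hdec l i hl
      rw [hg, hg'] at hlt
      obtain ⟨j, hj, hval⟩ := exists_lt_of_toLex_lt hdisj hgF hg'F hlt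
      refine ⟨g' j, (hWmem _).2 ⟨j, hg'F j, hj⟩, ?_⟩
      have hle' := hle (g' j)
      rw [← hg, ← hg'] at hval
      rw [Finsupp.add_apply] at hle'
      omega
    · rw [Ideal.span_le]
      rintro _ ⟨v, hv, rfl⟩
      obtain ⟨j, hvF, hvlt⟩ := (hWmem v).1 hv
      obtain ⟨l, hl⟩ := hupdate j v hvF
      have hli : l < i := hanti.lt_iff_gt.1 (toLex_lt_of_add_single_eq hvlt hl)
      refine Submodule.mem_colon.2 fun q hq => ?_
      obtain ⟨a, rfl⟩ := Ideal.mem_span_singleton'.1 hq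
      have hX : (X v : MvPolynomial (Fin n) K) * monomial (f i) 1 =
          X (g j) * monomial (f l) 1 := by
        simp only [X, monomial_mul, one_mul]
        rw [add_comm, ← hl, add_comm]
      rw [smul_eq_mul, mul_left_comm, hX]
      exact Ideal.mul_mem_left _ _ (Ideal.mul_mem_left _ _
        (Ideal.subset_span ⟨_, ⟨l, hli, rfl⟩, rfl⟩))
  · calc W.card = ∑ j, {v ∈ F j | v < g j}.card := hWcard
      _ ≤ ∑ _j : Fin s, (k - 1) :=
        Finset.sum_le_sum fun j _ => (Finset.card_le_card (hsub j)).trans (herase j).le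
      _ = (k - 1) * s := by simp [mul_comm]
  · have hfilter (j) : {v ∈ F j | v < g j} = (F j).erase (g j) := by
      refine (hsub j).antisymm fun v hv => ?_
      obtain ⟨hne, hvF⟩ := Finset.mem_erase.1 hv
      refine Finset.mem_filter.2 ⟨hvF, lt_of_not_ge fun hge => ?_⟩
      obtain ⟨l, hl⟩ := hupdate j v hvF
      have hil : i < l :=
        hanti.lt_iff_gt.1 (toLex_lt_of_add_single_eq (hge.lt_of_ne' hne) hl.symm)
      have := l.isLt
      have : (i : ℕ) < l := hil
      omega
    simp [hWcard, hfilter, herase, mul_comm]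
end

section
/- Let K be a field, Δ a pure shellable simplicial complex of dimension d on X = {x_1,…,x_n}, and k a positive integer. Let S^k = K[x_{ij} : 1 ≤ i ≤ n, 1 ≤ j ≤ k]. Then the face ring K[Δ^k] = S^k/I_{Δ^k} admits a Stanley decomposition in which every Stanley space has dimension at least d+1; in particular the Stanley depth of K[Δ^k] is at least d+1, which equals the depth of K[Δ^k], so K[Δ^k] satisfies the Stanley conjecture. -/
open MvPolynomial

/-- The Stanley–Reisner ideal of a simplicial complex on a vertex type `σ`. -/
noncomputable def srIdeal (K : Type*) [Field K] {σ : Type*} (Δ : Set (Finset σ)) :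
    Ideal (MvPolynomial σ K) :=
  Ideal.span {m | ∃ G : Finset σ, G ∉ Δ ∧ m = ∏ i ∈ G, X i}

/-- The Stanley space `u K[Z]` inside the face ring `K[Δ^k]`, where `u` is the class of the
monomial with exponent vector `b` and `Z` is a set of variables: the `K`-subspace consisting
of all elements `u·v` with `v` a polynomial in the variables of `Z`. -/
noncomputable def stanleySpace (K : Type*) [Field K] {n : ℕ} (k : ℕ)
    (Δ : Set (Finset (Fin n))) (b : (Fin n × Fin k) →₀ ℕ) (Z : Finset (Fin n × Fin k)) :
    Submodule K (MvPolynomial (Fin n × Fin k) K ⧸ srIdeal K (expansion k Δ)) :=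
  Submodule.span K
    {x | ∃ p ∈ MvPolynomial.supported K (↑Z : Set (Fin n × Fin k)),
      x = Ideal.Quotient.mk (srIdeal K (expansion k Δ)) (monomial b 1 * p)}

/-- Membership in a Stanley–Reisner ideal, read off from the monomials of the polynomial. -/
theorem mem_srIdeal_iff (K : Type*) [Field K] {σ : Type*} {Γ : Set (Finset σ)}
    (hΓ : IsComplex Γ) (p : MvPolynomial σ K) :
    p ∈ srIdeal K Γ ↔ ∀ m : σ →₀ ℕ, m.support ∈ Γ → coeff m p = 0 := by
  classical
  have hgen : {m : MvPolynomial σ K | ∃ G : Finset σ, G ∉ Γ ∧ m = ∏ i ∈ G, X i} =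
      (fun s => monomial s (1 : K)) ''
        {s : σ →₀ ℕ | ∃ G : Finset σ, G ∉ Γ ∧ s = ∑ i ∈ G, Finsupp.single i 1} := by
    ext q
    constructor
    · rintro ⟨G, hG, rfl⟩
      exact ⟨_, ⟨G, hG, rfl⟩, by simp [monomial_sum_one, X]⟩
    · rintro ⟨_, ⟨G, hG, rfl⟩, rfl⟩
      exact ⟨G, hG, by simp [monomial_sum_one, X]⟩
  have hval : ∀ (G : Finset σ) (x : σ),
      (∑ i ∈ G, Finsupp.single i 1 : σ →₀ ℕ) x = if x ∈ G then 1 else 0 := by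
    intro G x
    simp [Finsupp.finsetSum_apply, Finsupp.single_apply]
  rw [srIdeal, hgen, mem_ideal_span_monomial_image]
  constructor
  · intro h m hm
    by_contra hc
    obtain ⟨_, ⟨G, hG, rfl⟩, hle⟩ := h m (mem_support_iff.2 hc)
    refine hG (hΓ hm fun x hx => ?_)
    have hx' := hle x
    rw [hval, if_pos hx] at hx'
    exact Finsupp.mem_support_iff.2 (by omega)
  · intro h m hm
    refine ⟨_, ⟨m.support, fun hs => mem_support_iff.1 hm (h m hs), rfl⟩, fun x => ?_⟩
    rw [hval]
    split_ifs with hx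
    · exact Nat.one_le_iff_ne_zero.2 (Finsupp.mem_support_iff.1 hx)
    · exact Nat.zero_le _

/-- The exponent vectors of the monomials in `x ^ b · K[Z]`. -/
def InStanleyCell {σ : Type*} (b : σ →₀ ℕ) (Z : Finset σ) (m : σ →₀ ℕ) : Prop :=
  b ≤ m ∧ ∀ x ∉ Z, m x ≤ b x

theorem inStanleyCell_of_coeff_ne_zero {K : Type*} [Field K] {σ : Type*} {b : σ →₀ ℕ}
    {Z : Finset σ} {p : MvPolynomial σ K} (hp : p ∈ supported K (↑Z : Set σ)) {m : σ →₀ ℕ}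
    (hm : coeff m (monomial b 1 * p) ≠ 0) : InStanleyCell b Z m := by
  classical
  rw [coeff_monomial_mul', one_mul] at hm
  split_ifs at hm with hle
  · refine ⟨hle, fun x hx => ?_⟩
    by_contra hlt
    refine hx (mem_supported.1 hp (mem_vars_iff_mem_support x |>.2 ⟨m - b, mem_support_iff.2 hm, ?_⟩))
    rw [Finsupp.mem_support_iff, Finsupp.tsub_apply]
    omega
  · exact absurd rfl hm

theorem inStanleyCell_add {K : Type*} [Field K] {σ : Type*} (b : σ →₀ ℕ)
    {Z : Finset σ} {p : MvPolynomial σ K} (hp : p ∈ supported K (↑Z : Set σ)) {a : σ →₀ ℕ}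
    (ha : coeff a p ≠ 0) : InStanleyCell b Z (b + a) :=
  inStanleyCell_of_coeff_ne_zero hp (by rwa [coeff_monomial_mul, one_mul])

theorem isComplex_expansion {V : Type*} (k : ℕ) (Δ : Set (Finset V)) :
    IsComplex (expansion k Δ) :=
  fun _ _ ⟨F, hF, h⟩ hGF => ⟨F, hF, hGF.trans h⟩

/-- A family of cells partitioning the exponent vectors supported on faces of `Δ^k` yields a
Stanley decomposition of the face ring. -/
theorem stanleyDecomposition_of_partition (K : Type*) [Field K] {n k : ℕ}
    (Δ : Set (Finset (Fin n))) {ι : Type*} (b : ι → ((Fin n × Fin k) →₀ ℕ))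
    (Z : ι → Finset (Fin n × Fin k))
    (hsub : ∀ t m, InStanleyCell (b t) (Z t) m → m.support ∈ expansion k Δ)
    (hcover : ∀ m : (Fin n × Fin k) →₀ ℕ, m.support ∈ expansion k Δ →
      ∃ t, InStanleyCell (b t) (Z t) m)
    (hdisj : ∀ s t m, InStanleyCell (b s) (Z s) m → InStanleyCell (b t) (Z t) m → s = t) :
    (∀ t, Function.Injective fun p : MvPolynomial.supported K (↑(Z t) : Set (Fin n × Fin k)) =>
        Ideal.Quotient.mk (srIdeal K (expansion k Δ))
          (monomial (b t) 1 * (p : MvPolynomial (Fin n × Fin k) K))) ∧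
      iSupIndep (fun t => stanleySpace K k Δ (b t) (Z t)) ∧
      (⨆ t, stanleySpace K k Δ (b t) (Z t)) = ⊤ := by
  classical
  have hmem := mem_srIdeal_iff K (isComplex_expansion k Δ)
  -- the coefficient functionals on the face ring
  have hcoeff : ∀ m : (Fin n × Fin k) →₀ ℕ, m.support ∈ expansion k Δ →
      ∃ c : (MvPolynomial (Fin n × Fin k) K ⧸ srIdeal K (expansion k Δ)) →ₗ[K] K,
        ∀ p, c (Ideal.Quotient.mk (srIdeal K (expansion k Δ)) p) = coeff m p := by
    intro m hm
    exact ⟨((srIdeal K (expansion k Δ)).restrictScalars K).liftQ (lcoeff K m)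
      fun p hp => (hmem p).1 hp m hm, fun p => rfl⟩
  choose! c hc using hcoeff
  have hker : ∀ t m, m.support ∈ expansion k Δ → ¬ InStanleyCell (b t) (Z t) m →
      stanleySpace K k Δ (b t) (Z t) ≤ LinearMap.ker (c m) := by
    intro t m hm hcell
    refine Submodule.span_le.2 ?_
    rintro _ ⟨p, hp, rfl⟩
    rw [SetLike.mem_coe, LinearMap.mem_ker, hc m hm]
    by_contra hne
    exact hcell (inStanleyCell_of_coeff_ne_zero hp hne)
  refine ⟨fun t p q hpq => ?_, fun t => ?_, ?_⟩
  · have hI := (hmem _).1 (Ideal.Quotient.eq.1 hpq)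
    rw [← sub_eq_zero]
    refine Subtype.ext (MvPolynomial.ext _ _ fun a => ?_)
    by_contra ha
    have hcell := inStanleyCell_add (b t) (p - q).2 ha
    have h0 := hI _ (hsub t _ hcell)
    rw [← mul_sub, coeff_monomial_mul, one_mul] at h0
    exact ha h0
  · rw [Submodule.disjoint_def]
    intro x hx hx'
    obtain ⟨y, rfl⟩ := Ideal.Quotient.mk_surjective x
    rw [Ideal.Quotient.eq_zero_iff_mem, hmem]
    intro m hm
    rw [← hc m hm]
    by_cases hcell : InStanleyCell (b t) (Z t) m
    · have hle : (⨆ s, ⨆ (_ : s ≠ t), stanleySpace K k Δ (b s) (Z s)) ≤ LinearMap.ker (c m) :=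
        iSup₂_le fun s hs => hker s m hm fun h => hs (hdisj s t m h hcell)
      exact hle hx'
    · exact hker t m hm hcell hx
  · rw [eq_top_iff]
    rintro x -
    obtain ⟨y, rfl⟩ := Ideal.Quotient.mk_surjective x
    rw [y.as_sum, map_sum]
    refine Submodule.sum_mem _ fun m _ => ?_
    by_cases hm : m.support ∈ expansion k Δ
    · obtain ⟨t, hle, hZ⟩ := hcover m hm
      refine Submodule.mem_iSup_of_mem t (Submodule.subset_span
        ⟨monomial (m - b t) (coeff m y), ?_, ?_⟩)
      · refine mem_supported.2 fun x hx => ?_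
        obtain ⟨a, ha, hxa⟩ := (mem_vars_iff_mem_support x).1 hx
        obtain rfl := Finset.mem_singleton.1 (support_monomial_subset ha)
        by_contra hxZ
        have := hZ x hxZ
        rw [Finsupp.mem_support_iff, Finsupp.tsub_apply] at hxa
        omega
      · rw [monomial_mul, one_mul, add_tsub_cancel_of_le hle]
    · convert Submodule.zero_mem _
      rw [Ideal.Quotient.eq_zero_iff_mem, hmem]
      intro a ha
      rw [coeff_monomial, if_neg]
      rintro rfl
      exact hm ha

/-- The restriction of the facet `F j` in a shelling order: the vertices `v ∈ F j` such that
`F j \ {v}` lies in an earlier facet. -/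
def shellingRestriction {V : Type*} [DecidableEq V] {r : ℕ} (F : Fin r → Finset V)
    (j : Fin r) : Finset V :=
  {v ∈ F j | ∃ i < j, (F j).erase v ⊆ F i}

theorem exists_shellingRestriction_subset {V : Type*} [DecidableEq V] {r : ℕ}
    (F : Fin r → Finset V) {P : Finset V} (hP : ∃ j, P ⊆ F j) :
    ∃ j, shellingRestriction F j ⊆ P ∧ P ⊆ F j := by
  obtain ⟨j, hj, hmin⟩ := WellFounded.has_min (wellFounded_lt (α := Fin r)) {j | P ⊆ F j} hP
  refine ⟨j, fun v hv => ?_, hj⟩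
  obtain ⟨-, i, hij, hi⟩ := Finset.mem_filter.1 hv
  by_contra hvP
  exact hmin i ((Finset.subset_erase.2 ⟨hj, hvP⟩).trans hi) hij

theorem IsShellingOrder.not_subset_of_lt {V : Type*} [DecidableEq V] {r : ℕ}
    {F : Fin r → Finset V} (hF : IsShellingOrder F) {P : Finset V} {i j : Fin r}
    (hR : shellingRestriction F j ⊆ P) (hPj : P ⊆ F j) (hij : i < j) : ¬ P ⊆ F i := by
  intro hPi
  obtain ⟨G, ⟨hGj, i', hi', hGi⟩, hPG, hcard⟩ :=
    hF j (Nat.zero_lt_of_lt hij) P ⟨hPj, i, hij, hPi⟩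
  obtain ⟨v, hv⟩ := Finset.card_eq_one.1 (show (F j \ G).card = 1 by
    rw [Finset.card_sdiff_of_subset hGj]; omega)
  have hvm : v ∈ F j \ G := hv ▸ Finset.mem_singleton_self v
  obtain ⟨hvF, hvG⟩ := Finset.mem_sdiff.1 hvm
  refine hvG (hPG (hR (Finset.mem_filter.2 ⟨hvF, i', hi', fun x hx => hGi ?_⟩)))
  by_contra hxG
  have : x ∈ F j \ G := Finset.mem_sdiff.2 ⟨Finset.mem_of_mem_erase hx, hxG⟩
  rw [hv, Finset.mem_singleton] at this
  exact Finset.ne_of_mem_erase hx this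

theorem IsShellingOrder.eq_of_restriction_subset {V : Type*} [DecidableEq V] {r : ℕ}
    {F : Fin r → Finset V} (hF : IsShellingOrder F) {P : Finset V} {i j : Fin r}
    (hRi : shellingRestriction F i ⊆ P) (hPi : P ⊆ F i)
    (hRj : shellingRestriction F j ⊆ P) (hPj : P ⊆ F j) : i = j := by
  rcases lt_trichotomy i j with h | h | h
  · exact absurd hPi (hF.not_subset_of_lt hRj hPj h)
  · exact h
  · exact absurd hPj (hF.not_subset_of_lt hRi hPi h)

/-- The exponent vector of `∏ i ∈ R, x_{i, l i}`. -/
noncomputable def cellBase {n k : ℕ} (R : Finset (Fin n)) (l : R → Fin k) :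
    (Fin n × Fin k) →₀ ℕ :=
  Finsupp.equivFunOnFinite.symm fun x => if ∃ h : x.1 ∈ R, l ⟨x.1, h⟩ = x.2 then 1 else 0

/-- The variables `x_{ic}` with `i ∈ F` and, if `i ∈ R`, with `l i ≤ c`. -/
def cellVars {n k : ℕ} (F R : Finset (Fin n)) (l : R → Fin k) : Finset (Fin n × Fin k) :=
  {x | x.1 ∈ F ∧ ∀ h : x.1 ∈ R, l ⟨x.1, h⟩ ≤ x.2}

theorem inStanleyCell_cell_iff {n k : ℕ} {F R : Finset (Fin n)} (hRF : R ⊆ F) (l : R → Fin k)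
    (m : (Fin n × Fin k) →₀ ℕ) :
    InStanleyCell (cellBase R l) (cellVars F R l) m ↔
      m.support ⊆ expandSet k F ∧
        ∀ i : R, m (i, l i) ≠ 0 ∧ ∀ c < l i, m (i, c) = 0 := by
  have hb : ∀ x, cellBase R l x = if ∃ h : x.1 ∈ R, l ⟨x.1, h⟩ = x.2 then 1 else 0 :=
    fun x => rfl
  constructor
  · rintro ⟨hle, hZ⟩
    refine ⟨fun x hx => ?_, fun i => ⟨?_, fun c hci => ?_⟩⟩
    · by_contra hxF
      have hxF' : x.1 ∉ F := fun h => hxF (Finset.mem_product.2 ⟨h, Finset.mem_univ _⟩)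
      have h0 := hZ x fun h => hxF' (Finset.mem_filter.1 h).2.1
      rw [hb, if_neg fun ⟨h, _⟩ => hxF' (hRF h)] at h0
      exact Finsupp.mem_support_iff.1 hx (Nat.le_zero.1 h0)
    · have h1 := hle (i, l i)
      rw [hb, if_pos ⟨i.2, rfl⟩] at h1
      omega
    · have h0 := hZ (i, c) fun h => absurd ((Finset.mem_filter.1 h).2.2 i.2) (not_le.2 hci)
      rw [hb, if_neg fun ⟨_, h⟩ => hci.ne' h] at h0
      exact Nat.le_zero.1 h0
  · rintro ⟨hsupp, hl⟩
    refine ⟨fun x => ?_, fun x hx => ?_⟩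
    · rw [hb]
      split_ifs with h
      · obtain ⟨h, hx⟩ := h
        have h1 := (hl ⟨x.1, h⟩).1
        rw [hx] at h1
        exact Nat.one_le_iff_ne_zero.2 h1
      · exact Nat.zero_le _
    · suffices m x = 0 by omega
      by_contra hmx
      refine hx (Finset.mem_filter.2 ⟨Finset.mem_univ _,
        (Finset.mem_product.1 (hsupp (Finsupp.mem_support_iff.2 hmx))).1, fun h => ?_⟩)
      by_contra hlt
      exact hmx ((hl ⟨x.1, h⟩).2 x.2 (not_le.1 hlt))

theorem card_le_card_cellVars {n k : ℕ} (hk : 1 ≤ k) (F R : Finset (Fin n)) (l : R → Fin k) :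
    F.card ≤ (cellVars F R l).card := by
  refine Finset.card_le_card_of_injOn
    (fun i => (i, if h : i ∈ R then l ⟨i, h⟩ else ⟨0, hk⟩)) (fun i hi => ?_)
    fun i _ i' _ h => congrArg Prod.fst h
  refine Finset.mem_coe.2 (Finset.mem_filter.2 ⟨Finset.mem_univ _, hi, fun h => ?_⟩)
  have h' : i ∈ R := h
  simp [h']

theorem image_fst_support_subset_iff {n k : ℕ} (m : (Fin n × Fin k) →₀ ℕ)
    (F : Finset (Fin n)) :
    m.support.image Prod.fst ⊆ F ↔ m.support ⊆ expandSet k F := by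
  simp [Finset.subset_iff, expandSet]

/-- Theorem: if `Δ` is a pure shellable `d`-dimensional simplicial complex and `k ≥ 1`,
then the face ring `K[Δ^k] = S^k / I_{Δ^k}` of the expansion admits a Stanley decomposition
all of whose Stanley spaces have dimension at least `d + 1`: there are finitely many monomial
classes `u t` (with exponent vectors `b t`) and sets of variables `Z t` with `|Z t| ≥ d + 1`
such that each `u t · K[Z t]` is a free `K[Z t]`-module of rank one (the multiplication map is
injective) and `K[Δ^k]` is the internal direct sum of the Stanley spaces `u t · K[Z t]`.
In particular the Stanley depth of `K[Δ^k]` is at least `d + 1`, which is its depth, so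
`K[Δ^k]` satisfies the Stanley conjecture. -/
theorem expansion_face_ring_stanley (K : Type*) [Field K] {n : ℕ}
    (Δ : Set (Finset (Fin n))) (hΔ : IsComplex Δ) (d k : ℕ) (hk : 1 ≤ k)
    (hpure : ∀ F ∈ facets Δ, F.card = d + 1)
    (hne : ∃ F, F ∈ facets Δ)
    (hshell : IsShellable Δ) :
    ∃ (T : ℕ) (b : Fin T → ((Fin n × Fin k) →₀ ℕ)) (Z : Fin T → Finset (Fin n × Fin k)),
      (∀ t, d + 1 ≤ (Z t).card) ∧
      (∀ t, Function.Injective fun p : MvPolynomial.supported K (↑(Z t) : Set (Fin n × Fin k)) =>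
        Ideal.Quotient.mk (srIdeal K (expansion k Δ))
          (monomial (b t) 1 * (p : MvPolynomial (Fin n × Fin k) K))) ∧
      iSupIndep (fun t => stanleySpace K k Δ (b t) (Z t)) ∧
      (⨆ t, stanleySpace K k Δ (b t) (Z t)) = ⊤ := by
  classical
  obtain ⟨r, F, -, hrange, hF⟩ := hshell
  have hfacet : ∀ j, F j ∈ facets Δ := fun j => hrange ▸ Set.mem_range_self j
  have hRF : ∀ j, shellingRestriction F j ⊆ F j := fun j => Finset.filter_subset _ _
  let ι := Σ j : Fin r, (shellingRestriction F j → Fin k)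
  let e : Fin (Fintype.card ι) ≃ ι := (Fintype.equivFin ι).symm
  refine ⟨Fintype.card ι, fun t => cellBase _ (e t).2, fun t => cellVars (F (e t).1) _ (e t).2,
    fun t => (hpure _ (hfacet (e t).1)).symm.le.trans (card_le_card_cellVars hk _ _ _),
    stanleyDecomposition_of_partition K Δ _ _ ?_ ?_ ?_⟩
  · intro t m h
    exact ⟨_, hfacet (e t).1, ((inStanleyCell_cell_iff (hRF _) _ m).1 h).1⟩
  · rintro m ⟨G, hG, hm⟩
    obtain ⟨j₀, rfl⟩ : G ∈ Set.range F := hrange ▸ hG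
    obtain ⟨j, hRj, hPj⟩ := exists_shellingRestriction_subset F
      ⟨j₀, (image_fst_support_subset_iff m _).2 hm⟩
    have hmin : ∀ i : shellingRestriction F j,
        ∃ c, m (i, c) ≠ 0 ∧ ∀ c' < c, m (i, c') = 0 := by
      intro i
      obtain ⟨⟨i', c⟩, hc, rfl : i' = i⟩ := Finset.mem_image.1 (hRj i.2)
      obtain ⟨c₀, hc₀, hlt⟩ := WellFounded.has_min (wellFounded_lt (α := Fin k))
        {c | m (i, c) ≠ 0} ⟨c, Finsupp.mem_support_iff.1 hc⟩
      exact ⟨c₀, hc₀, fun c' hc' => by_contra fun h => hlt c' h hc'⟩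
    choose l hl using hmin
    refine ⟨e.symm ⟨j, l⟩, ?_⟩
    rw [e.apply_symm_apply]
    exact (inStanleyCell_cell_iff (hRF j) l m).2 ⟨(image_fst_support_subset_iff m _).1 hPj, hl⟩
  · intro s t m hs ht
    have hs' := (inStanleyCell_cell_iff (hRF _) _ m).1 hs
    have ht' := (inStanleyCell_cell_iff (hRF _) _ m).1 ht
    apply e.injective
    clear hs ht
    generalize e s = s at hs'
    generalize e t = t at ht'
    have hR : ∀ u : ι, (∀ i, m (i.1, u.2 i) ≠ 0 ∧ ∀ c < u.2 i, m (i.1, c) = 0) →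
        shellingRestriction F u.1 ⊆ m.support.image Prod.fst := fun u hu i hi =>
      Finset.mem_image.2 ⟨(i, u.2 ⟨i, hi⟩), Finsupp.mem_support_iff.2 (hu ⟨i, hi⟩).1, rfl⟩
    have hj := hF.eq_of_restriction_subset (hR s hs'.2)
      ((image_fst_support_subset_iff m _).2 hs'.1) (hR t ht'.2)
      ((image_fst_support_subset_iff m _).2 ht'.1)
    obtain ⟨j, l⟩ := s
    obtain ⟨j', l'⟩ := t
    obtain rfl : j = j' := hj
    congr 1
    funext i
    rcases lt_trichotomy (l i) (l' i) with h | h | h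
    · exact absurd ((ht'.2 i).2 _ h) (hs'.2 i).1
    · exact h
    · exact absurd ((hs'.2 i).2 _ h) (ht'.2 i).1
end

section
/- Let G be a simple graph on X = {x_1,…,x_n}, let k be a positive integer, and let G' be the graph obtained from G by duplicating each vertex k−1 times, i.e., V(G') = {x_{ij} : 1 ≤ i ≤ n, 1 ≤ j ≤ k} and E(G') = {x_{ir}x_{js} : x_ix_j ∈ E(G), 1 ≤ r,s ≤ k}. Then G is shellable if and only if G' is k-shellable. -/
/-- The independence complex of a graph: faces are the independent sets. -/
def indepComplex {V : Type*} (G : SimpleGraph V) : Set (Finset V) :=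
  {F | ∀ x ∈ F, ∀ y ∈ F, ¬ G.Adj x y}

/-- The closed neighborhood `N_G[S]` of a set of vertices. -/
def closedNbhd {V : Type*} (G : SimpleGraph V) (S : Set V) : Set V :=
  ⋃ x ∈ S, insert x (G.neighborSet x)

/-- The independence complex of the induced subgraph of `G` on `A`, viewed inside the
ambient vertex set: its faces are the independent sets of `G` contained in `A`. -/
def inducedIndep {V : Type*} (G : SimpleGraph V) (A : Set V) : Set (Finset V) :=
  {F | ↑F ⊆ A ∧ F ∈ indepComplex G}

theorem expandSet_subset_expandSet_iff {V : Type*} {k : ℕ} (hk : 1 ≤ k) {F H : Finset V} :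
    expandSet k F ⊆ expandSet k H ↔ F ⊆ H := by
  refine ⟨fun h x hx => ?_, fun h p hp => mem_expandSet.2 (h (mem_expandSet.1 hp))⟩
  exact mem_expandSet.1 (h (mem_expandSet.2 hx : ((x, ⟨0, hk⟩) : V × Fin k) ∈ expandSet k F))

theorem subset_expandSet_iff {V : Type*} [DecidableEq V] {k : ℕ} {F : Finset V}
    {H : Finset (V × Fin k)} : H ⊆ expandSet k F ↔ H.image Prod.fst ⊆ F := by
  rw [Finset.image_subset_iff]
  exact forall₂_congr fun _ _ => mem_expandSet

theorem expandSet_mem_indepComplex {V : Type*} {G : SimpleGraph V} {k : ℕ} {F : Finset V}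
    (hF : F ∈ indepComplex G) :
    expandSet k F ∈ indepComplex (SimpleGraph.comap (Prod.fst : V × Fin k → V) G) :=
  fun _ hx _ hy => hF _ (mem_expandSet.1 hx) _ (mem_expandSet.1 hy)

theorem image_fst_mem_indepComplex {V : Type*} [DecidableEq V] {G : SimpleGraph V} {k : ℕ}
    {H : Finset (V × Fin k)}
    (hH : H ∈ indepComplex (SimpleGraph.comap (Prod.fst : V × Fin k → V) G)) :
    H.image Prod.fst ∈ indepComplex G := by
  intro x hx y hy
  obtain ⟨p, hp, rfl⟩ := Finset.mem_image.1 hx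
  obtain ⟨q, hq, rfl⟩ := Finset.mem_image.1 hy
  exact hH p hp q hq

/-- The maximal independent sets of the duplicated graph are the expansions of those of `G`. -/
theorem facets_indepComplex_comap_fst {V : Type*} [DecidableEq V] (G : SimpleGraph V) {k : ℕ}
    (hk : 1 ≤ k) :
    facets (indepComplex (SimpleGraph.comap (Prod.fst : V × Fin k → V) G)) =
      expandSet k '' facets (indepComplex G) := by
  ext H
  constructor
  · rintro ⟨hH, hmax⟩
    have hEq : H = expandSet k (H.image Prod.fst) :=
      hmax _ (expandSet_mem_indepComplex (image_fst_mem_indepComplex hH))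
        (subset_expandSet_iff.2 subset_rfl)
    refine ⟨H.image Prod.fst, ⟨image_fst_mem_indepComplex hH, fun K hK hsub => ?_⟩, hEq.symm⟩
    exact expandSet_injective hk
      (hEq.symm.trans (hmax _ (expandSet_mem_indepComplex hK) (subset_expandSet_iff.2 hsub)))
  · rintro ⟨F, ⟨hF, hmax⟩, rfl⟩
    refine ⟨expandSet_mem_indepComplex hF, fun H hH hsub => hsub.antisymm ?_⟩
    rw [subset_expandSet_iff]
    refine (hmax _ (image_fst_mem_indepComplex hH) ?_).symm.subset
    exact (expandSet_subset_expandSet_iff hk).1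
      (hsub.trans (subset_expandSet_iff.2 subset_rfl))

theorem interFace_expandSet_comp_iff {V : Type*} [DecidableEq V] {k r : ℕ}
    {F : Fin r → Finset V} {j : Fin r} {H : Finset (V × Fin k)} :
    interFace (expandSet k ∘ F) j H ↔ interFace F j (H.image Prod.fst) := by
  simp only [interFace, Function.comp_apply, subset_expandSet_iff]

theorem subset_union_of_card_add_one {α : Type*} [DecidableEq α] {A σ τ : Finset α}
    (hσ : σ ⊆ A) (hτ : τ ⊆ A) (hσc : σ.card + 1 = A.card) (hτc : τ.card + 1 = A.card)
    (hne : σ ≠ τ) : A ⊆ σ ∪ τ := by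
  refine (Finset.eq_of_subset_of_card_le (Finset.union_subset hσ hτ) ?_).symm.subset
  have hlt : σ.card < (σ ∪ τ).card := by
    refine Finset.card_lt_card (Finset.subset_union_left.ssubset_of_ne fun h => hne ?_)
    exact (Finset.eq_of_subset_of_card_le (Finset.union_eq_left.1 h.symm) (by omega)).symm
  omega

theorem IsShellingOrder.expandSet_comp {V : Type*} [DecidableEq V] {k r : ℕ}
    (hk : 1 ≤ k) {F : Fin r → Finset V} (hF : IsShellingOrder F) :
    IsKShellingOrder k (expandSet k ∘ F) := by
  classical
  intro j hj
  set T := (F j).powerset.filter fun σ => interFace F j σ ∧ σ.card + 1 = (F j).card with hT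
  have mem_T {σ : Finset V} : σ ∈ T ↔ interFace F j σ ∧ σ.card + 1 = (F j).card := by
    simp only [hT, Finset.mem_filter, Finset.mem_powerset, and_iff_right_iff_imp]
    exact fun h => h.1.1
  refine ⟨T.image (expandSet k), ?_, ?_, fun H => ?_, fun hcard => ?_⟩
  · obtain ⟨σ, hσ, -, hc⟩ := hF j hj ∅ ⟨by simp, ⟨0, by omega⟩, hj, by simp⟩
    exact ⟨_, Finset.mem_image_of_mem _ (mem_T.2 ⟨hσ, hc⟩)⟩
  · intro _ hσ
    obtain ⟨σ, hσT, rfl⟩ := Finset.mem_image.1 hσ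
    obtain ⟨hσ, hc⟩ := mem_T.1 hσT
    refine ⟨(expandSet_subset_expandSet_iff hk).2 hσ.1, ?_⟩
    rw [Function.comp_apply, card_expandSet, card_expandSet, ← hc, Nat.succ_mul]
  · rw [interFace_expandSet_comp_iff]
    constructor
    · intro h
      obtain ⟨σ, hσ, hsub, hc⟩ := hF j hj _ h
      exact ⟨_, Finset.mem_image_of_mem _ (mem_T.2 ⟨hσ, hc⟩), subset_expandSet_iff.2 hsub⟩
    · rintro ⟨_, hσ, hsub⟩
      obtain ⟨σ, hσT, rfl⟩ := Finset.mem_image.1 hσ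
      obtain ⟨⟨h₁, i, hi, h₂⟩, -⟩ := mem_T.1 hσT
      rw [subset_expandSet_iff] at hsub
      exact ⟨hsub.trans h₁, i, hi, hsub.trans h₂⟩
  · intro _ hσ _ hτ hdisj
    obtain ⟨σ, hσT, rfl⟩ := Finset.mem_image.1 hσ
    obtain ⟨τ, hτT, rfl⟩ := Finset.mem_image.1 hτ
    obtain ⟨hσ, hσc⟩ := mem_T.1 hσT
    obtain ⟨hτ, hτc⟩ := mem_T.1 hτT
    have hne : σ ≠ τ := by
      rintro rfl
      have hσ_empty : σ = ∅ :=
        expandSet_injective hk ((disjoint_self.1 hdisj).trans (by simp [expandSet]))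
      have hT_sub : T ⊆ {∅} := by
        intro ρ hρ
        have hρc := (mem_T.1 hρ).2
        rw [Finset.mem_singleton, ← Finset.card_eq_zero]
        rw [hσ_empty, Finset.card_empty] at hσc
        omega
      have h₁ := Finset.card_le_card hT_sub
      have h₂ : (T.image (expandSet k)).card ≤ T.card := Finset.card_image_le
      rw [Finset.card_singleton] at h₁
      omega
    intro p hp
    have hmem := subset_union_of_card_add_one hσ.1 hτ.1 hσc hτc hne (mem_expandSet.1 hp)
    simpa only [Finset.mem_union, mem_expandSet] using hmem

theorem IsKShellingOrder.of_expandSet_comp {V : Type*} [DecidableEq V] {k r : ℕ}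
    (hk : 1 ≤ k) {F : Fin r → Finset V} (hF : IsKShellingOrder k (expandSet k ∘ F)) :
    IsShellingOrder F := by
  intro j hj H hH
  obtain ⟨S, -, hS, hgen, -⟩ := hF j hj
  have hHE : interFace (expandSet k ∘ F) j (expandSet k H) := by
    obtain ⟨h₁, i, hi, h₂⟩ := hH
    exact ⟨(expandSet_subset_expandSet_iff hk).2 h₁, i, hi,
      (expandSet_subset_expandSet_iff hk).2 h₂⟩
  obtain ⟨σ, hσS, hHσ⟩ := (hgen _).1 hHE
  obtain ⟨hσj, i, hi, hσi⟩ := (hgen σ).2 ⟨σ, hσS, subset_rfl⟩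
  have hσ_sub : σ ⊆ expandSet k (F j ∩ F i) :=
    subset_expandSet_iff.2
      (Finset.subset_inter (subset_expandSet_iff.1 hσj) (subset_expandSet_iff.1 hσi))
  obtain ⟨τ, hτS, hτ⟩ := (hgen (expandSet k (F j ∩ F i))).1
    ⟨(expandSet_subset_expandSet_iff hk).2 Finset.inter_subset_left, i, hi,
      (expandSet_subset_expandSet_iff hk).2 Finset.inter_subset_right⟩
  have hσc := (hS σ hσS).2
  have hτc := (hS τ hτS).2
  have h₁ := Finset.card_le_card hσ_sub
  have h₂ := Finset.card_le_card hτ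
  refine ⟨F j ∩ F i, ⟨Finset.inter_subset_left, i, hi, Finset.inter_subset_right⟩,
    (expandSet_subset_expandSet_iff hk).1 (hHσ.trans hσ_sub), ?_⟩
  have hc : (expandSet k (F j ∩ F i)).card + k = (expandSet k (F j)).card := by
    simp only [Function.comp_apply] at hσc hτc
    omega
  rw [card_expandSet, card_expandSet, ← Nat.succ_mul] at hc
  exact Nat.eq_of_mul_eq_mul_right hk hc

/-- Theorem: a graph `G` is shellable iff the graph `G'` obtained from `G` by duplicating
each vertex `k - 1` times is `k`-shellable (shellability of a graph means shellability of
its independence complex). -/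
theorem shellable_iff_duplicate_kShellable {V : Type*} [DecidableEq V] [Fintype V]
    (G : SimpleGraph V) (k : ℕ) (hk : 1 ≤ k) :
    IsShellable (indepComplex G) ↔
      IsKShellable k (indepComplex (SimpleGraph.comap (Prod.fst : V × Fin k → V) G)) := by
  constructor
  · rintro ⟨r, F, hinj, hrange, hF⟩
    refine ⟨r, expandSet k ∘ F, (expandSet_injective hk).comp hinj, ?_, hF.expandSet_comp hk⟩
    rw [Set.range_comp, hrange, facets_indepComplex_comap_fst G hk]
  · rintro ⟨r, F', hinj, hrange, hF'⟩
    rw [facets_indepComplex_comap_fst G hk] at hrange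
    have hmem (j : Fin r) : ∃ A ∈ facets (indepComplex G), expandSet k A = F' j :=
      (Set.ext_iff.1 hrange (F' j)).1 ⟨j, rfl⟩
    choose F _ hFF' using hmem
    obtain rfl : expandSet k ∘ F = F' := funext hFF'
    refine ⟨r, F, hinj.of_comp, ?_, hF'.of_expandSet_comp hk⟩
    rw [Set.range_comp] at hrange
    exact (expandSet_injective hk).image_injective hrange
end

section
/- Let G be a simple graph and k ≥ 1. If S is a k-simplicial set of G such that both induced subgraphs G \ S and G \ N_G[S] are k-shellable, then G is k-shellable. -/
/-- `S` is a `k`-simplicial set of `G` with parts `P 0, …, P (r-1)`: `S` consists of pairwise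
non-adjacent vertices, and the induced subgraph of `G` on `N_G[S]` is a complete `r`-partite
graph whose parts `P i` all have exactly `k` elements, with any two vertices in the same part
having the same open neighborhood in `G`. -/
def IsKSimplicialWithParts {V : Type*} (G : SimpleGraph V) (k : ℕ) (S : Finset V)
    {r : ℕ} (P : Fin r → Finset V) : Prop :=
  (∀ x ∈ S, ∀ y ∈ S, ¬ G.Adj x y) ∧
  (∀ i, (P i).card = k) ∧
  (∀ i j, i ≠ j → Disjoint (P i) (P j)) ∧
  closedNbhd G ↑S = ⋃ i, ↑(P i) ∧
  (∀ i j, ∀ x ∈ P i, ∀ y ∈ P j, (G.Adj x y ↔ i ≠ j)) ∧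
  (∀ i, ∀ x ∈ P i, ∀ y ∈ P i, G.neighborSet x = G.neighborSet y)

/-- `S` is a `k`-simplicial set of `G`. -/
def IsKSimplicial {V : Type*} (G : SimpleGraph V) (k : ℕ) (S : Finset V) : Prop :=
  ∃ (r : ℕ) (P : Fin r → Finset V), IsKSimplicialWithParts G k S P

/-- The condition for a facet `F` to be added to a family `A` of facets in a `k`-shelling,
phrased through the intersections `Y ∩ F` with `Y ∈ A` instead of a generating set of faces. -/
def IsKShellingStep {V : Type*} [DecidableEq V] (k : ℕ) (A : Set (Finset V)) (F : Finset V) :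
    Prop :=
  (∀ X ∈ A, ∃ Y ∈ A, X ∩ F ⊆ Y ∩ F ∧ (Y ∩ F).card + k = F.card) ∧
  (∀ Y ∈ A, ∀ Z ∈ A, (Y ∩ F).card + k = F.card → (Z ∩ F).card + k = F.card →
    Y ∩ F ≠ Z ∩ F → Disjoint (Y ∩ F) (Z ∩ F) → F ⊆ Y ∪ Z)

theorem IsKShellingOrder.isKShellingStep {V : Type*} [DecidableEq V] {k r : ℕ}
    {F : Fin r → Finset V} (hF : IsKShellingOrder k F) (j : Fin r) :
    IsKShellingStep k {X | ∃ i < j, F i = X} (F j) := by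
  rcases Nat.eq_zero_or_pos (j : ℕ) with hj | hj
  · have hempty : ∀ i, ¬ i < j := fun i hi => by
      have : (i : ℕ) < j := hi
      omega
    constructor
    · rintro X ⟨i, hi, -⟩
      exact (hempty i hi).elim
    · rintro X ⟨i, hi, -⟩
      exact (hempty i hi).elim
  obtain ⟨S, -, hS, hgen, hdisj⟩ := hF j hj
  have key : ∀ i < j, ∃ σ ∈ S, F i ∩ F j ⊆ σ := fun i hi =>
    (hgen _).1 ⟨Finset.inter_subset_right, i, hi, Finset.inter_subset_left⟩
  constructor
  · rintro X ⟨i, hi, rfl⟩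
    obtain ⟨σ, hσ, hsub⟩ := key i hi
    obtain ⟨-, m, hm, hσm⟩ := (hgen σ).2 ⟨σ, hσ, Finset.Subset.refl _⟩
    obtain ⟨τ, hτ, hsub'⟩ := key m hm
    have h1 : σ ⊆ F m ∩ F j := Finset.subset_inter hσm (hS σ hσ).1
    have h2 := Finset.card_le_card h1
    have h3 := Finset.card_le_card hsub'
    have h4 := (hS σ hσ).2
    have h5 := (hS τ hτ).2
    exact ⟨F m, ⟨m, hm, rfl⟩, hsub.trans h1, by omega⟩
  · have mem : ∀ i < j, (F i ∩ F j).card + k = (F j).card → F i ∩ F j ∈ S := by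
      intro i hi hc
      obtain ⟨σ, hσ, hsub⟩ := key i hi
      have h4 := (hS σ hσ).2
      rw [Finset.eq_of_subset_of_card_le hsub (by omega)]
      exact hσ
    rintro Y ⟨i, hi, rfl⟩ Z ⟨m, hm, rfl⟩ hY hZ hne hd
    have hcard : 1 < S.card :=
      Finset.one_lt_card.2 ⟨_, mem i hi hY, _, mem m hm hZ, hne⟩
    exact (hdisj hcard _ (mem i hi hY) _ (mem m hm hZ) hd).trans
      (Finset.union_subset_union Finset.inter_subset_left Finset.inter_subset_left)

theorem isKShellingOrder_of_isKShellingStep {V : Type*} [DecidableEq V] {k r : ℕ}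
    {F : Fin r → Finset V}
    (hF : ∀ j, IsKShellingStep k {X | ∃ i < j, F i = X} (F j)) : IsKShellingOrder k F := by
  intro j hj
  obtain ⟨hsub, hdisj⟩ := hF j
  let S : Finset (Finset V) := ((Finset.univ.filter fun i : Fin r =>
    i < j ∧ (F i ∩ F j).card + k = (F j).card)).image fun i => F i ∩ F j
  have memS : ∀ σ, σ ∈ S ↔ ∃ i, (i < j ∧ (F i ∩ F j).card + k = (F j).card) ∧ F i ∩ F j = σ := by
    intro σ
    simp [S]
  have key : ∀ i < j, ∃ σ ∈ S, F i ∩ F j ⊆ σ := by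
    intro i hi
    obtain ⟨Y, ⟨m, hm, rfl⟩, h1, h2⟩ := hsub _ ⟨i, hi, rfl⟩
    exact ⟨_, (memS _).2 ⟨m, ⟨hm, h2⟩, rfl⟩, h1⟩
  refine ⟨S, ?_, ?_, ?_, ?_⟩
  · obtain ⟨σ, hσ, -⟩ := key ⟨0, hj.trans j.2⟩ hj
    exact ⟨σ, hσ⟩
  · intro σ hσ
    obtain ⟨i, ⟨-, hi⟩, rfl⟩ := (memS σ).1 hσ
    exact ⟨Finset.inter_subset_right, hi⟩
  · intro G
    constructor
    · rintro ⟨hGj, i, hi, hGi⟩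
      obtain ⟨σ, hσ, h⟩ := key i hi
      exact ⟨σ, hσ, (Finset.subset_inter hGi hGj).trans h⟩
    · rintro ⟨σ, hσ, h⟩
      obtain ⟨i, ⟨hi, -⟩, rfl⟩ := (memS σ).1 hσ
      exact ⟨h.trans Finset.inter_subset_right, i, hi, h.trans Finset.inter_subset_left⟩
  · intro hcard σ hσ τ hτ hd
    obtain ⟨i, ⟨hi, hci⟩, rfl⟩ := (memS σ).1 hσ
    obtain ⟨m, ⟨hm, hcm⟩, rfl⟩ := (memS τ).1 hτ
    have hne : F i ∩ F j ≠ F m ∩ F j := by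
      intro heq
      rw [← heq, disjoint_self, Finset.bot_eq_empty] at hd
      rw [hd, Finset.card_empty] at hci
      obtain ⟨a, ha, b, hb, hab⟩ := Finset.one_lt_card.1 hcard
      obtain ⟨p, ⟨-, hp⟩, rfl⟩ := (memS a).1 ha
      obtain ⟨q, ⟨-, hq⟩, rfl⟩ := (memS b).1 hb
      apply hab
      rw [Finset.card_eq_zero.1 (by omega : (F p ∩ F j).card = 0),
        Finset.card_eq_zero.1 (by omega : (F q ∩ F j).card = 0)]
    have h := hdisj _ ⟨i, hi, rfl⟩ _ ⟨m, hm, rfl⟩ hci hcm hne hd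
    rw [← Finset.union_inter_distrib_right]
    exact Finset.subset_inter h (Finset.Subset.refl _)

/-- A `k`-shellable complex has a ranking of its facets along which every facet is a shelling
step. -/
theorem IsKShellable.exists_rank {V : Type*} [DecidableEq V] {k : ℕ} {Δ : Set (Finset V)}
    (h : IsKShellable k Δ) :
    ∃ f : Finset V → ℕ, Set.InjOn f (facets Δ) ∧
      ∀ F ∈ facets Δ, IsKShellingStep k {X | X ∈ facets Δ ∧ f X < f F} F := by
  obtain ⟨r, F, hinj, hrange, hF⟩ := h
  have hf : ∀ i, Function.extend F (fun i => (i : ℕ)) 0 (F i) = i := fun i => by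
    rw [hinj.extend_apply]
  refine ⟨Function.extend F (fun i => (i : ℕ)) 0, ?_, ?_⟩
  · rw [← hrange]
    rintro _ ⟨i, rfl⟩ _ ⟨m, rfl⟩ him
    rw [hf, hf] at him
    rw [Fin.ext him]
  · rw [← hrange]
    rintro _ ⟨j, rfl⟩
    convert hF.isKShellingStep j using 1
    ext X
    constructor
    · rintro ⟨⟨i, rfl⟩, hlt⟩
      rw [hf, hf] at hlt
      exact ⟨i, hlt, rfl⟩
    · rintro ⟨i, hi, rfl⟩
      refine ⟨⟨i, rfl⟩, ?_⟩
      rw [hf, hf]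
      exact hi

/-- A ranking of the facets along which every facet is a shelling step gives a `k`-shelling. -/
theorem isKShellable_of_rank {V α : Type*} [DecidableEq V] [LinearOrder α] {k : ℕ}
    {Δ : Set (Finset V)} (hfin : (facets Δ).Finite) (f : Finset V → α)
    (hf : Set.InjOn f (facets Δ))
    (hstep : ∀ F ∈ facets Δ, IsKShellingStep k {X | X ∈ facets Δ ∧ f X < f F} F) :
    IsKShellable k Δ := by
  let T : Finset α := hfin.toFinset.image f
  let e := T.orderEmbOfFin rfl
  have hmem : ∀ i, ∃ X ∈ facets Δ, f X = e i := by
    intro i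
    have h := T.orderEmbOfFin_mem rfl i
    obtain ⟨X, hX, hXe⟩ := Finset.mem_image.1 h
    exact ⟨X, hfin.mem_toFinset.1 hX, hXe⟩
  choose F hF hFe using hmem
  have hsurj : ∀ X ∈ facets Δ, ∃ i, F i = X := by
    intro X hX
    have h : f X ∈ (T : Set α) :=
      Finset.mem_coe.2 (Finset.mem_image_of_mem f (hfin.mem_toFinset.2 hX))
    rw [← T.range_orderEmbOfFin rfl] at h
    obtain ⟨i, hi⟩ := h
    exact ⟨i, hf (hF i) hX ((hFe i).trans hi)⟩
  refine ⟨T.card, F, ?_, ?_, isKShellingOrder_of_isKShellingStep fun j => ?_⟩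
  · intro i m him
    apply e.injective
    rw [← hFe, ← hFe, him]
  · ext X
    exact ⟨fun ⟨i, hi⟩ => hi ▸ hF i, hsurj X⟩
  · convert hstep (F j) (hF j) using 1
    ext X
    constructor
    · rintro ⟨i, hi, rfl⟩
      refine ⟨hF i, ?_⟩
      rw [hFe, hFe]
      exact e.lt_iff_lt.2 hi
    · rintro ⟨hX, hlt⟩
      obtain ⟨i, rfl⟩ := hsurj X hX
      rw [hFe, hFe] at hlt
      exact ⟨i, e.lt_iff_lt.1 hlt, rfl⟩

theorem exists_facet_superset {V : Type*} [Fintype V] {Δ : Set (Finset V)} {F : Finset V}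
    (hF : F ∈ Δ) : ∃ H ∈ facets Δ, F ⊆ H := by
  obtain ⟨H, hFH, hH⟩ := (Set.toFinite Δ).exists_le_maximal hF
  exact ⟨H, ⟨hH.1, fun K hK hHK => le_antisymm hHK (hH.2 hK hHK)⟩, hFH⟩

theorem insert_mem_indepComplex {V : Type*} [DecidableEq V] {G : SimpleGraph V} {H : Finset V}
    (hH : H ∈ indepComplex G) {x : V} (hx : ∀ y ∈ H, ¬ G.Adj x y) :
    insert x H ∈ indepComplex G := by
  intro a ha b hb hab
  rcases Finset.mem_insert.1 ha with rfl | haH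
  · rcases Finset.mem_insert.1 hb with rfl | hbH
    · exact G.irrefl hab
    · exact hx b hbH hab
  · rcases Finset.mem_insert.1 hb with rfl | hbH
    · exact hx a haH hab.symm
    · exact hH a haH b hbH hab

/-- A vertex without neighbours in a facet of an induced independence complex belongs to it. -/
theorem mem_of_mem_facets_inducedIndep {V : Type*} [DecidableEq V] {G : SimpleGraph V}
    {A : Set V} {H : Finset V} (hH : H ∈ facets (inducedIndep G A)) {x : V} (hxA : x ∈ A)
    (hx : ∀ y ∈ H, ¬ G.Adj x y) : x ∈ H := by
  have h := hH.2 (insert x H) ⟨?_, insert_mem_indepComplex hH.1.2 hx⟩ (Finset.subset_insert _ _)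
  · rw [h]
    exact Finset.mem_insert_self _ _
  · rw [Finset.coe_insert]
    exact Set.insert_subset hxA hH.1.1

theorem inducedIndep_univ {V : Type*} (G : SimpleGraph V) :
    inducedIndep G Set.univ = indepComplex G := by
  ext F
  simp [inducedIndep]

theorem mem_of_mem_facets_indepComplex {V : Type*} [DecidableEq V] {G : SimpleGraph V}
    {H : Finset V} (hH : H ∈ facets (indepComplex G)) {x : V}
    (hx : ∀ y ∈ H, ¬ G.Adj x y) : x ∈ H := by
  rw [← inducedIndep_univ] at hH
  exact mem_of_mem_facets_inducedIndep hH (Set.mem_univ x) hx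

/-- An independent set containing every vertex without neighbours in it is a facet. -/
theorem mem_facets_indepComplex {V : Type*} {G : SimpleGraph V} {H : Finset V}
    (hH : H ∈ indepComplex G) (h : ∀ x, (∀ y ∈ H, ¬ G.Adj x y) → x ∈ H) :
    H ∈ facets (indepComplex G) :=
  ⟨hH, fun _ hK hHK => Finset.Subset.antisymm hHK fun x hx =>
    h x fun y hy => hK x hx y (hHK hy)⟩

theorem mem_facets_inducedIndep {V : Type*} {G : SimpleGraph V} {A : Set V} {H : Finset V}
    (hA : ↑H ⊆ A) (hH : H ∈ indepComplex G)
    (h : ∀ x ∈ A, (∀ y ∈ H, ¬ G.Adj x y) → x ∈ H) :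
    H ∈ facets (inducedIndep G A) :=
  ⟨⟨hA, hH⟩, fun _ hK hHK => Finset.Subset.antisymm hHK fun x hx =>
    h x (hK.1 hx) fun y hy => hK.2 x hx y (hHK hy)⟩

/-- Vertices with equal neighbourhoods belong to the same facets. -/
theorem mem_facet_of_neighborSet_eq {V : Type*} [DecidableEq V] {G : SimpleGraph V}
    {H : Finset V} (hH : H ∈ facets (indepComplex G)) {x y : V} (hx : x ∈ H)
    (hxy : G.neighborSet x = G.neighborSet y) : y ∈ H :=
  mem_of_mem_facets_indepComplex hH fun z hz hyz => by
    have h : z ∈ G.neighborSet y := hyz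
    rw [← hxy] at h
    exact hH.1 x hx z hz h

theorem mem_closedNbhd {V : Type*} {G : SimpleGraph V} {S : Set V} {y : V} :
    y ∈ closedNbhd G S ↔ ∃ x ∈ S, y = x ∨ G.Adj x y := by
  simp [closedNbhd]

theorem disjoint_of_mem_facets_inducedIndep {V : Type*} {G : SimpleGraph V}
    {S F : Finset V}
    (hF : F ∈ facets (inducedIndep G (closedNbhd G (S : Set V))ᶜ)) : Disjoint F S :=
  Finset.disjoint_left.2 fun x hx hxS =>
    hF.1.1 (Finset.mem_coe.2 hx) (mem_closedNbhd.2 ⟨x, hxS, Or.inl rfl⟩)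

/-- The members of a nonempty `k`-simplicial set are exactly those of one of the parts. -/
theorem IsKSimplicialWithParts.exists_part_eq {V : Type*} {G : SimpleGraph V} {k r : ℕ}
    {S : Finset V} {P : Fin r → Finset V} (h : IsKSimplicialWithParts G k S P)
    (hne : S.Nonempty) : ∃ i, S = P i := by
  obtain ⟨hind, -, -, hN, hadj, -⟩ := h
  have part : ∀ y ∈ closedNbhd G (S : Set V), ∃ i, y ∈ P i := by
    intro y hy
    rw [hN] at hy
    simpa using hy
  have self : ∀ y ∈ S, y ∈ closedNbhd G (S : Set V) := fun y hy =>
    mem_closedNbhd.2 ⟨y, hy, Or.inl rfl⟩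
  obtain ⟨s, hs⟩ := hne
  obtain ⟨i, hi⟩ := part s (self s hs)
  have hSi : ∀ y ∈ S, y ∈ P i := by
    intro y hy
    obtain ⟨j, hj⟩ := part y (self y hy)
    have hij : i = j := by
      by_contra hij
      exact hind s hs y hy ((hadj i j s hi y hj).2 hij)
    exact hij ▸ hj
  refine ⟨i, Finset.Subset.antisymm hSi fun y hy => ?_⟩
  have hyN : y ∈ closedNbhd G (S : Set V) := by
    rw [hN]
    exact Set.mem_iUnion.2 ⟨i, hy⟩
  obtain ⟨x, hx, rfl | hxy⟩ := mem_closedNbhd.1 hyN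
  · exact hx
  · exact ((hadj i i x (hSi x hx) y hy).1 hxy rfl).elim

section KSimplicial

variable {V : Type*} [DecidableEq V] {G : SimpleGraph V} {k : ℕ} {S : Finset V}

/-- A facet avoiding a nonempty `k`-simplicial set `S` meets `N_G[S]` in a single class of
`k` vertices with a common neighbourhood. -/
theorem IsKSimplicial.exists_class (hS : IsKSimplicial G k S) (hne : S.Nonempty)
    {H : Finset V} (hH : H ∈ facets (indepComplex G)) (hd : Disjoint S H) :
    ∃ Q ⊆ H, Q.card = k ∧ (∀ x ∈ S, ∀ y ∈ Q, G.Adj x y) ∧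
      (∀ y ∈ H, y ∈ closedNbhd G (S : Set V) → y ∈ Q) ∧
      (∀ x ∈ Q, ∀ y ∈ Q, G.neighborSet x = G.neighborSet y) := by
  obtain ⟨r, P, hP⟩ := hS
  obtain ⟨i, hi⟩ := hP.exists_part_eq hne
  obtain ⟨-, hcard, -, hN, hadj, htwin⟩ := hP
  obtain ⟨s, hs⟩ := hne
  obtain ⟨y, hy, hsy⟩ : ∃ y ∈ H, G.Adj s y := by
    by_contra! hcon
    exact Finset.disjoint_left.1 hd hs (mem_of_mem_facets_indepComplex hH hcon)
  have hyN : y ∈ closedNbhd G (S : Set V) := mem_closedNbhd.2 ⟨s, hs, Or.inr hsy⟩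
  rw [hN] at hyN
  obtain ⟨l, hl⟩ := Set.mem_iUnion.1 hyN
  have hil : i ≠ l := (hadj i l s (hi ▸ hs) y hl).1 hsy
  refine ⟨P l, fun z hz => mem_facet_of_neighborSet_eq hH hy (htwin l y hl z hz), hcard l,
    fun x hx z hz => (hadj i l x (hi ▸ hx) z hz).2 hil, fun z hz hzN => ?_, htwin l⟩
  rw [hN] at hzN
  obtain ⟨m, hm⟩ := Set.mem_iUnion.1 hzN
  have hlm : l = m := by
    by_contra hlm
    exact hH.1 y hy z hz ((hadj l m y hl z hm).2 hlm)
  exact hlm ▸ hm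

theorem IsKSimplicial.subset_or_disjoint (hS : IsKSimplicial G k S)
    {H : Finset V} (hH : H ∈ facets (indepComplex G)) : S ⊆ H ∨ Disjoint S H := by
  obtain ⟨r, P, hP⟩ := hS
  by_cases hd : Disjoint S H
  · exact Or.inr hd
  · left
    obtain ⟨s, hs, hsH⟩ := Finset.not_disjoint_iff.1 hd
    obtain ⟨i, hi⟩ := hP.exists_part_eq ⟨s, hs⟩
    exact fun x hx => mem_facet_of_neighborSet_eq hH hsH
      (hP.2.2.2.2.2 i s (hi ▸ hs) x (hi ▸ hx))

theorem sdiff_mem_facets_inducedIndep {H : Finset V} (hH : H ∈ facets (indepComplex G))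
    (hSH : S ⊆ H) : H \ S ∈ facets (inducedIndep G (closedNbhd G (S : Set V))ᶜ) := by
  refine mem_facets_inducedIndep ?_ ?_ ?_
  · intro y hy hyN
    obtain ⟨hyH, hyS⟩ := Finset.mem_sdiff.1 (Finset.mem_coe.1 hy)
    obtain ⟨x, hx, rfl | hxy⟩ := mem_closedNbhd.1 hyN
    · exact hyS hx
    · exact hH.1 x (hSH hx) y hyH hxy
  · intro x hx y hy
    exact hH.1 x (Finset.mem_sdiff.1 hx).1 y (Finset.mem_sdiff.1 hy).1
  · intro x hx h
    rw [Finset.mem_sdiff]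
    refine ⟨mem_of_mem_facets_indepComplex hH fun y hy hxy => ?_,
      fun hxS => hx (mem_closedNbhd.2 ⟨x, hxS, Or.inl rfl⟩)⟩
    by_cases hyS : y ∈ S
    · exact hx (mem_closedNbhd.2 ⟨y, hyS, Or.inr hxy.symm⟩)
    · exact h y (Finset.mem_sdiff.2 ⟨hy, hyS⟩) hxy

theorem IsKSimplicial.union_mem_facets (hS : IsKSimplicial G k S)
    {F : Finset V} (hF : F ∈ facets (inducedIndep G (closedNbhd G (S : Set V))ᶜ)) :
    F ∪ S ∈ facets (indepComplex G) := by
  obtain ⟨r, P, hP⟩ := hS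
  have hFS : ∀ x ∈ S, ∀ y ∈ F, ¬ G.Adj x y := fun x hx y hy hxy =>
    hF.1.1 (Finset.mem_coe.2 hy) (mem_closedNbhd.2 ⟨x, hx, Or.inr hxy⟩)
  refine mem_facets_indepComplex ?_ ?_
  · intro x hx y hy hxy
    rcases Finset.mem_union.1 hx with hx | hx <;> rcases Finset.mem_union.1 hy with hy | hy
    · exact hF.1.2 x hx y hy hxy
    · exact hFS y hy x hx hxy.symm
    · exact hFS x hx y hy hxy
    · exact hP.1 x hx y hy hxy
  · intro x hx
    by_cases hxN : x ∈ closedNbhd G (S : Set V)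
    · obtain ⟨s, hs, rfl | hsx⟩ := mem_closedNbhd.1 hxN
      · exact Finset.mem_union_right _ hs
      · exact (hx s (Finset.mem_union_right _ hs) hsx.symm).elim
    · exact Finset.mem_union_left _ (mem_of_mem_facets_inducedIndep hF hxN
        fun y hy => hx y (Finset.mem_union_left _ hy))

theorem mem_facets_inducedIndep_compl {H : Finset V} (hH : H ∈ facets (indepComplex G))
    (hd : Disjoint S H) : H ∈ facets (inducedIndep G (S : Set V)ᶜ) :=
  mem_facets_inducedIndep (fun _ hy hyS => Finset.disjoint_left.1 hd hyS hy) hH.1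
    fun _ _ hx => mem_of_mem_facets_indepComplex hH hx

/-- A facet of `G \ S` meeting `N_G[S]` is a facet of `G`. -/
theorem IsKSimplicial.mem_facets_of_mem_closedNbhd (hS : IsKSimplicial G k S) {F : Finset V}
    (hF : F ∈ facets (inducedIndep G (S : Set V)ᶜ)) {y : V} (hy : y ∈ F)
    (hyN : y ∈ closedNbhd G (S : Set V)) : F ∈ facets (indepComplex G) := by
  obtain ⟨r, P, hP⟩ := hS
  refine mem_facets_indepComplex hF.1.2 fun x hx => ?_
  refine mem_of_mem_facets_inducedIndep hF (fun hxS => ?_) hx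
  obtain ⟨s, hs, rfl | hsy⟩ := mem_closedNbhd.1 hyN
  · exact hF.1.1 (Finset.mem_coe.2 hy) hs
  · obtain ⟨i, hi⟩ := hP.exists_part_eq ⟨s, hs⟩
    have h : y ∈ G.neighborSet s := hsy
    rw [hP.2.2.2.2.2 i s (hi ▸ hs) x (hi ▸ Finset.mem_coe.1 hxS)] at h
    exact hx y hy h

/-- Facets containing `S`, taken in the order of a shelling of `G \ N_G[S]`, are shelling
steps. -/
theorem IsKSimplicial.isKShellingStep_of_subset (hS : IsKSimplicial G k S) (hne : S.Nonempty)
    {f : Finset V → ℕ} {H : Finset V} {A : Set (Finset V)} (hSH : S ⊆ H)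
    (hstep : IsKShellingStep k
      {X | X ∈ facets (inducedIndep G (closedNbhd G (S : Set V))ᶜ) ∧ f X < f (H \ S)} (H \ S))
    (hA : ∀ X, X ∈ A ↔ X ∈ facets (indepComplex G) ∧ S ⊆ X ∧ f (X \ S) < f (H \ S)) :
    IsKShellingStep k A H := by
  constructor
  · intro X hX
    obtain ⟨hXf, hSX, hlt⟩ := (hA X).1 hX
    obtain ⟨Y, ⟨hY, hYlt⟩, hsub, hcard⟩ :=
      hstep.1 (X \ S) ⟨sdiff_mem_facets_inducedIndep hXf hSX, hlt⟩
    have hYS := disjoint_of_mem_facets_inducedIndep hY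
    have hinter : (Y ∪ S) ∩ H = Y ∩ (H \ S) ∪ S := by
      ext x
      have h1 := @hSH x
      have h2 : x ∈ Y → x ∉ S := fun hx => Finset.disjoint_left.1 hYS hx
      simp only [Finset.mem_inter, Finset.mem_union, Finset.mem_sdiff]
      tauto
    refine ⟨Y ∪ S, (hA _).2 ⟨hS.union_mem_facets hY, Finset.subset_union_right, ?_⟩, ?_, ?_⟩
    · rwa [Finset.union_sdiff_cancel_right hYS]
    · rw [hinter]
      intro x hx
      by_cases hxS : x ∈ S
      · exact Finset.mem_union_right _ hxS
      · refine Finset.mem_union_left _ (hsub ?_)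
        simp only [Finset.mem_inter, Finset.mem_sdiff] at hx ⊢
        tauto
    · have hdis : Disjoint (Y ∩ (H \ S)) S := hYS.mono_left Finset.inter_subset_left
      have hHS := Finset.card_sdiff_add_card_eq_card hSH
      rw [hinter, Finset.card_union_of_disjoint hdis]
      omega
  · intro Y hY Z hZ _ _ _ hd
    obtain ⟨s, hs⟩ := hne
    exact (Finset.disjoint_left.1 hd
      (Finset.mem_inter.2 ⟨((hA Y).1 hY).2.1 hs, hSH hs⟩)
      (Finset.mem_inter.2 ⟨((hA Z).1 hZ).2.1 hs, hSH hs⟩)).elim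

/-- Facets avoiding `S`, added after all facets containing `S` in the order of a shelling of
`G \ S`, are shelling steps. -/
theorem IsKSimplicial.isKShellingStep_of_disjoint [Fintype V] (hS : IsKSimplicial G k S)
    (hne : S.Nonempty) {f : Finset V → ℕ} {H : Finset V} {A : Set (Finset V)}
    (hH : H ∈ facets (indepComplex G)) (hd : Disjoint S H)
    (hstep : IsKShellingStep k {X | X ∈ facets (inducedIndep G (S : Set V)ᶜ) ∧ f X < f H} H)
    (hA : ∀ X, X ∈ A ↔ X ∈ facets (indepComplex G) ∧ (S ⊆ X ∨ Disjoint S X ∧ f X < f H)) :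
    IsKShellingStep k A H := by
  obtain ⟨Q, hQH, hQcard, hSQ, hNQ, htwin⟩ := hS.exists_class hne hH hd
  have hHQ := Finset.card_sdiff_add_card_eq_card hQH
  have hsdiff : ∀ X ∈ facets (indepComplex G), S ⊆ X → X ∩ H ⊆ H \ Q := by
    intro X hX hSX y hy
    obtain ⟨hyX, hyH⟩ := Finset.mem_inter.1 hy
    refine Finset.mem_sdiff.2 ⟨hyH, fun hyQ => ?_⟩
    obtain ⟨s, hs⟩ := hne
    exact hX.1 s (hSX hs) y hyX (hSQ s hs y hyQ)
  have hbase : ∃ Y ∈ A, Y ∩ H = H \ Q := by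
    have hmem : H \ Q ∈ inducedIndep G (closedNbhd G (S : Set V))ᶜ := by
      constructor
      · intro y hy hyN
        obtain ⟨hyH, hyQ⟩ := Finset.mem_sdiff.1 (Finset.mem_coe.1 hy)
        exact hyQ (hNQ y hyH hyN)
      · intro x hx y hy
        exact hH.1 x (Finset.mem_sdiff.1 hx).1 y (Finset.mem_sdiff.1 hy).1
    obtain ⟨F, hF, hsub⟩ := exists_facet_superset hmem
    have hFS := hS.union_mem_facets hF
    refine ⟨F ∪ S, (hA _).2 ⟨hFS, Or.inl Finset.subset_union_right⟩,
      Finset.Subset.antisymm (hsdiff _ hFS Finset.subset_union_right) ?_⟩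
    exact Finset.subset_inter (hsub.trans Finset.subset_union_left) Finset.sdiff_subset
  have hmixed : ∀ Y ∈ facets (indepComplex G), S ⊆ Y → ∀ Z ∈ facets (indepComplex G),
      (Y ∩ H).card + k = H.card → (Z ∩ H).card + k = H.card → Y ∩ H ≠ Z ∩ H →
      Disjoint (Y ∩ H) (Z ∩ H) → H ⊆ Y ∪ Z := by
    intro Y hY hSY Z hZ hYc hZc hYZ hdis
    have hYQ : Y ∩ H = H \ Q :=
      Finset.eq_of_subset_of_card_le (hsdiff Y hY hSY) (by omega)
    have hZne : (Z ∩ H).Nonempty := by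
      rw [Finset.nonempty_iff_ne_empty]
      intro h0
      apply hYZ
      rw [h0, ← Finset.card_eq_zero]
      rw [h0, Finset.card_empty] at hZc
      omega
    obtain ⟨z, hz⟩ := hZne
    obtain ⟨hzZ, hzH⟩ := Finset.mem_inter.1 hz
    have hzQ : z ∈ Q := by
      by_contra hzQ
      refine Finset.disjoint_left.1 hdis ?_ hz
      rw [hYQ]
      exact Finset.mem_sdiff.2 ⟨hzH, hzQ⟩
    intro x hx
    by_cases hxQ : x ∈ Q
    · exact Finset.mem_union_right _
        (mem_facet_of_neighborSet_eq hZ hzZ (htwin z hzQ x hxQ))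
    · have h : x ∈ Y ∩ H := by
        rw [hYQ]
        exact Finset.mem_sdiff.2 ⟨hx, hxQ⟩
      exact Finset.mem_union_left _ (Finset.mem_inter.1 h).1
  obtain ⟨B, hBA, hBH⟩ := hbase
  constructor
  · intro X hX
    by_cases hXQ : X ∩ H ⊆ H \ Q
    · exact ⟨B, hBA, by rwa [hBH], by rw [hBH]; omega⟩
    obtain ⟨hXf, hSX | ⟨hdX, hlt⟩⟩ := (hA X).1 hX
    · exact (hXQ (hsdiff X hXf hSX)).elim
    obtain ⟨Y, ⟨hY, hYlt⟩, hsub, hcard⟩ :=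
      hstep.1 X ⟨mem_facets_inducedIndep_compl hXf hdX, hlt⟩
    obtain ⟨y, hyX, hyQ⟩ := Finset.not_subset.1 hXQ
    have hyH : y ∈ H := (Finset.mem_inter.1 hyX).2
    have hyQ' : y ∈ Q := by
      by_contra h
      exact hyQ (Finset.mem_sdiff.2 ⟨hyH, h⟩)
    have hyN : y ∈ closedNbhd G (S : Set V) := by
      obtain ⟨s, hs⟩ := hne
      exact mem_closedNbhd.2 ⟨s, hs, Or.inr (hSQ s hs y hyQ')⟩
    have hYf := hS.mem_facets_of_mem_closedNbhd hY (Finset.mem_inter.1 (hsub hyX)).1 hyN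
    have hYd : Disjoint S Y := Finset.disjoint_left.2 fun x hxS hxY =>
      hY.1.1 (Finset.mem_coe.2 hxY) hxS
    exact ⟨Y, (hA Y).2 ⟨hYf, Or.inr ⟨hYd, hYlt⟩⟩, hsub, hcard⟩
  · intro Y hY Z hZ hYc hZc hYZ hdis
    obtain ⟨hYf, hSY | ⟨hdY, hYlt⟩⟩ := (hA Y).1 hY
    · exact hmixed Y hYf hSY Z ((hA Z).1 hZ).1 hYc hZc hYZ hdis
    obtain ⟨hZf, hSZ | ⟨hdZ, hZlt⟩⟩ := (hA Z).1 hZ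
    · rw [Finset.union_comm]
      exact hmixed Z hZf hSZ Y hYf hZc hYc hYZ.symm hdis.symm
    · exact hstep.2 Y ⟨mem_facets_inducedIndep_compl hYf hdY, hYlt⟩
        Z ⟨mem_facets_inducedIndep_compl hZf hdZ, hZlt⟩ hYc hZc hYZ hdis

end KSimplicial

/-- Theorem: if `S` is a `k`-simplicial set of `G` such that both `G \ S` and `G \ N_G[S]`
are `k`-shellable, then `G` is `k`-shellable. -/
theorem isKShellable_of_kSimplicial {V : Type*} [DecidableEq V] [Fintype V]
    (G : SimpleGraph V) (k : ℕ) (hk : 1 ≤ k) (S : Finset V)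
    (hS : IsKSimplicial G k S)
    (h₁ : IsKShellable k (inducedIndep G (↑S)ᶜ))
    (h₂ : IsKShellable k (inducedIndep G (closedNbhd G ↑S)ᶜ)) :
    IsKShellable k (indepComplex G) := by
  rcases S.eq_empty_or_nonempty with rfl | hne
  · rwa [Finset.coe_empty, Set.compl_empty, inducedIndep_univ] at h₁
  obtain ⟨f₁, hf₁, hstep₁⟩ := h₁.exists_rank
  obtain ⟨f₂, hf₂, hstep₂⟩ := h₂.exists_rank
  let f : Finset V → ℕ ⊕ₗ ℕ := fun H =>
    if S ⊆ H then Sum.inlₗ (f₂ (H \ S)) else Sum.inrₗ (f₁ H)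
  have hin : ∀ H, S ⊆ H → f H = Sum.inlₗ (f₂ (H \ S)) := fun H h => if_pos h
  have hout : ∀ H, Disjoint S H → f H = Sum.inrₗ (f₁ H) := fun H h => if_neg fun hSH => by
    obtain ⟨s, hs⟩ := hne
    exact Finset.disjoint_left.1 h hs (hSH hs)
  have hnot : ∀ H, S ⊆ H → ¬ Disjoint S H := fun H hSH h => by
    obtain ⟨s, hs⟩ := hne
    exact Finset.disjoint_left.1 h hs (hSH hs)
  refine isKShellable_of_rank (Set.toFinite _) f ?_ ?_
  · intro X hX Y hY hXY
    rcases hS.subset_or_disjoint hX with hSX | hdX <;>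
      rcases hS.subset_or_disjoint hY with hSY | hdY
    · rw [hin X hSX, hin Y hSY] at hXY
      have h := hf₂ (sdiff_mem_facets_inducedIndep hX hSX)
        (sdiff_mem_facets_inducedIndep hY hSY) (Sum.inl_injective (toLex.injective hXY))
      rw [← Finset.sdiff_union_of_subset hSX, h, Finset.sdiff_union_of_subset hSY]
    · rw [hin X hSX, hout Y hdY] at hXY
      exact (Sum.inl_ne_inr (toLex.injective hXY)).elim
    · rw [hout X hdX, hin Y hSY] at hXY
      exact (Sum.inr_ne_inl (toLex.injective hXY)).elim
    · rw [hout X hdX, hout Y hdY] at hXY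
      exact hf₁ (mem_facets_inducedIndep_compl hX hdX) (mem_facets_inducedIndep_compl hY hdY)
        (Sum.inr_injective (toLex.injective hXY))
  · intro H hH
    rcases hS.subset_or_disjoint hH with hSH | hdH
    · refine hS.isKShellingStep_of_subset hne hSH
        (hstep₂ _ (sdiff_mem_facets_inducedIndep hH hSH)) fun X => ?_
      refine and_congr_right fun hX => ?_
      rw [hin H hSH]
      rcases hS.subset_or_disjoint hX with hSX | hdX
      · rw [hin X hSX, Sum.Lex.inl_lt_inl_iff]
        exact (and_iff_right hSX).symm
      · rw [hout X hdX]
        exact iff_of_false Sum.Lex.not_inr_lt_inl fun h => hnot X h.1 hdX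
    · refine hS.isKShellingStep_of_disjoint hne hH hdH
        (hstep₁ _ (mem_facets_inducedIndep_compl hH hdH)) fun X => ?_
      refine and_congr_right fun hX => ?_
      rw [hout H hdH]
      rcases hS.subset_or_disjoint hX with hSX | hdX
      · rw [hin X hSX]
        exact iff_of_true (Sum.Lex.inl_lt_inr _ _) (Or.inl hSX)
      · rw [hout X hdX, Sum.Lex.inr_lt_inr_iff]
        exact ⟨fun h => Or.inr ⟨hdX, h⟩, fun h => h.elim
          (fun hSX => (hnot X hSX hdX).elim) And.right⟩
end

section
/- Let G be a simple graph and let S, T ⊆ V(G), where T is a nonempty independent set of G with T ∩ S = ∅ and N_G[T] ⊆ N_G[S]. Then no independent set of the induced subgraph G \ N_G[S] is a maximal independent set of the induced subgraph G \ S. -/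
/-- `F` is a maximal element of a collection `𝒜` of finite sets. -/
def MaximalIn {V : Type*} (𝒜 : Set (Finset V)) (F : Finset V) : Prop :=
  F ∈ 𝒜 ∧ ∀ F' ∈ 𝒜, F ⊆ F' → F' = F

/-- Lemma: let `T` be a nonempty independent set of `G` with `T ∩ S = ∅` and
`N_G[T] ⊆ N_G[S]`.  Then no independent set of the induced subgraph `G \ N_G[S]` is a
maximal independent set of the induced subgraph `G \ S`. -/
theorem not_maximal_of_closedNbhd_subset {V : Type*} [DecidableEq V] [Fintype V]
    (G : SimpleGraph V) (S T : Finset V)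
    (hT : T ∈ indepComplex G) (hTne : T.Nonempty) (hTS : Disjoint T S)
    (hN : closedNbhd G ↑T ⊆ closedNbhd G ↑S) :
    ∀ F ∈ inducedIndep G (closedNbhd G ↑S)ᶜ, ¬ MaximalIn (inducedIndep G (↑S)ᶜ) F := by
  rintro F ⟨hFN, hF⟩ ⟨⟨hFS, -⟩, hmax⟩
  obtain ⟨t, ht⟩ := hTne
  have htN : t ∈ closedNbhd G ↑S := hN (Set.mem_biUnion ht (Set.mem_insert _ _))
  have htF : t ∉ F := fun h => hFN h htN
  have hadj : ∀ x ∈ F, ¬ G.Adj t x := fun x hx h =>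
    hFN hx (hN (Set.mem_biUnion ht (Set.mem_insert_of_mem _ h)))
  refine htF (hmax (insert t F) ⟨?_, ?_⟩ (Finset.subset_insert t F) ▸ Finset.mem_insert_self t F)
  · rw [Finset.coe_insert]
    exact Set.insert_subset (Finset.disjoint_left.mp hTS ht) hFS
  · intro x hx y hy
    rcases Finset.mem_insert.mp hx with rfl | hxF <;> rcases Finset.mem_insert.mp hy with rfl | hyF
    · exact G.irrefl
    · exact hadj y hyF
    · exact fun h => hadj x hxF h.symm
    · exact hF x hxF y hyF
end
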